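/- Let ω ≥ 1 be an integer and δ ∈ (0,1/8) be fixed, and let η > 0. The double series Ω₁(s) = (2 sin(πs)/π) · Σ_{k≥1} Σ_{j≥0} ((s)_j/(j!·4^j)) · (kω)^{-(2s+2j+1)} · ∫_{k^{δ-1}/ω}^{∞} u^{-2s-2j} · A₁(u) du converges absolutely and locally uniformly on the strip {s ∈ ℂ : 1 < Re(s) < 2}, and its sum extends holomorphically to a neighborhood of s = 0; moreover, for fixed ω and δ, as η → 0⁺ one has Ω₁(0) → 1/(6ω) and Ω₁'(0) - (γ/(3ω) + 1/(3ω) - (log 2)/(3ω) - (log ω)/(3ω) + (log η)/(3ω)) → 0. -/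

import Mathlib

open MeasureTheory Filter

/-- The Pochhammer symbol `(s)_j = s(s+1)⋯(s+j-1)`. -/
noncomputable def pochSym (s : ℂ) (j : ℕ) : ℂ := ∏ i ∈ Finset.range j, (s + i)

/-- `A₁(u) = ((5 - cosh(η)²)·cosh(η)·sinh(η)²/8) · u·(1 + u²sinh(η)²)^{-5/2}`. -/
noncomputable def coneA1 (η u : ℝ) : ℝ :=
  ((5 - Real.cosh η ^ 2) * Real.cosh η * Real.sinh η ^ 2 / 8) *
    (u * (1 + u ^ 2 * Real.sinh η ^ 2) ^ (-(5 : ℝ) / 2))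

/-- The `(k,j)`-term of the double series `Ω₁(s)`:
`(2 sin(πs)/π) · ((s)_j/(j!·4^j)) · (kω)^{-(2s+2j+1)} · ∫_{k^{δ-1}/ω}^∞ u^{-2s-2j}·A₁(u) du`. -/
noncomputable def Omega1Term (ω : ℕ) (η δ : ℝ) (k j : ℕ) (s : ℂ) : ℂ :=
  (2 * Complex.sin ((Real.pi : ℂ) * s) / (Real.pi : ℂ)) *
    (pochSym s j / ((Nat.factorial j : ℂ) * 4 ^ j)) *
    (((k : ℝ) * (ω : ℝ) : ℝ) : ℂ) ^ (-(2 * s + 2 * (j : ℂ) + 1)) *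
    ∫ u in Set.Ioi ((k : ℝ) ^ (δ - 1) / ω),
      (u : ℂ) ^ (-(2 * s) - 2 * (j : ℂ)) * ((coneA1 η u : ℝ) : ℂ)

/-! ### Basic facts on the profile function -/

noncomputable def hh (S u : ℝ) : ℝ := (1 + u ^ 2 * S ^ 2) ^ (-(5 : ℝ) / 2)

noncomputable def hC (S u : ℝ) : ℂ := (hh S u : ℂ)

lemma hh_base_pos (S u : ℝ) : 0 < 1 + u ^ 2 * S ^ 2 := by positivity

lemma hh_pos (S u : ℝ) : 0 < hh S u := Real.rpow_pos_of_pos (hh_base_pos S u) _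

lemma hh_le_one (S u : ℝ) : hh S u ≤ 1 := by
  apply Real.rpow_le_one_of_one_le_of_nonpos
  · nlinarith [mul_nonneg (sq_nonneg u) (sq_nonneg S)]
  · norm_num

lemma continuous_hh (S : ℝ) : Continuous (hh S) := by
  unfold hh
  refine Continuous.rpow_const (by fun_prop) ?_
  intro u; left; exact (hh_base_pos S u).ne'

lemma continuous_hC (S : ℝ) : Continuous (hC S) :=
  Complex.continuous_ofReal.comp (continuous_hh S)

lemma norm_hC (S u : ℝ) : ‖hC S u‖ = hh S u := by
  simp [hC, abs_of_pos (hh_pos S u)]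

lemma hh_le_pow {S u : ℝ} (hS : 0 < S) (hu : 0 < u) : hh S u ≤ S ^ (-(5 : ℝ)) * u ^ (-(5 : ℝ)) := by
  have h1 : hh S u ≤ (u ^ 2 * S ^ 2) ^ (-(5 : ℝ) / 2) := by
    apply Real.rpow_le_rpow_of_nonpos (by positivity) (by linarith) (by norm_num)
  refine h1.trans (le_of_eq ?_)
  rw [← Real.mul_rpow hS.le hu.le, ← mul_pow, ← Real.rpow_natCast, ← Real.rpow_mul (by positivity),
    mul_comm u S]
  norm_num

lemma hC_O_top {S : ℝ} (hS : 0 < S) : hC S =O[atTop] (fun x : ℝ => x ^ (-(5 : ℝ))) := by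
  apply Asymptotics.IsBigO.of_bound (S ^ (-(5 : ℝ)))
  filter_upwards [eventually_gt_atTop 0] with u hu
  rw [norm_hC, Real.norm_of_nonneg (by positivity)]
  exact hh_le_pow hS hu

lemma hC_O_bot (S : ℝ) : hC S =O[nhdsWithin 0 (Set.Ioi 0)] (fun x : ℝ => x ^ (-(0 : ℝ))) := by
  apply Asymptotics.IsBigO.of_bound 1
  filter_upwards with u
  rw [norm_hC]
  simpa using hh_le_one S u

lemma locInt_of_cont {f : ℝ → ℂ} (hf : Continuous f) : LocallyIntegrableOn f (Set.Ioi 0) :=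
  hf.locallyIntegrable.locallyIntegrableOn _

lemma locInt_ind {f : ℝ → ℂ} (hf : Continuous f) {A : Set ℝ} (hA : MeasurableSet A) :
    LocallyIntegrableOn (A.indicator f) (Set.Ioi 0) :=
  (hf.locallyIntegrable.indicator hA).locallyIntegrableOn _

lemma hC_mellin {S : ℝ} (hS : 0 < S) {s : ℂ} (h0 : 0 < s.re) (h5 : s.re < 5) :
    MellinConvergent (hC S) s :=
  mellinConvergent_of_isBigO_rpow (locInt_of_cont (continuous_hC S)) (hC_O_top hS) h5
    (hC_O_bot S) h0

lemma indTop_O_top {f : ℝ → ℂ} (a : ℝ) (h : f =O[atTop] (fun x : ℝ => x ^ (-(5 : ℝ)))) :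
    (Set.Ioi a).indicator f =O[atTop] (fun x : ℝ => x ^ (-(5 : ℝ))) := by
  refine Asymptotics.IsBigO.trans (Asymptotics.IsBigO.of_bound 1 ?_) h
  filter_upwards with u
  rw [one_mul]; exact norm_indicator_le_norm_self _ _

lemma indTop_O_bot {f : ℝ → ℂ} {a : ℝ} (ha : 0 < a) (b : ℝ) :
    (Set.Ioi a).indicator f =O[nhdsWithin 0 (Set.Ioi 0)] (fun x : ℝ => x ^ (-b)) := by
  apply Asymptotics.IsBigO.of_bound 0
  have : ∀ᶠ u : ℝ in nhdsWithin 0 (Set.Ioi 0), u < a :=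
    nhdsWithin_le_nhds (eventually_lt_nhds ha)
  filter_upwards [this] with u hu
  rw [Set.indicator_of_notMem (by simpa using hu.le)]
  simp

lemma indBot_O_bot {f : ℝ → ℂ} (a : ℝ) {b : ℝ}
    (h : f =O[nhdsWithin 0 (Set.Ioi 0)] (fun x : ℝ => x ^ (-b))) :
    (Set.Iic a).indicator f =O[nhdsWithin 0 (Set.Ioi 0)] (fun x : ℝ => x ^ (-b)) := by
  refine Asymptotics.IsBigO.trans (Asymptotics.IsBigO.of_bound 1 ?_) h
  filter_upwards with u
  rw [one_mul]; exact norm_indicator_le_norm_self _ _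

lemma indBot_O_top {f : ℝ → ℂ} (a : ℝ) (b : ℝ) :
    (Set.Iic a).indicator f =O[atTop] (fun x : ℝ => x ^ (-b)) := by
  apply Asymptotics.IsBigO.of_bound 0
  filter_upwards [eventually_gt_atTop a] with u hu
  rw [Set.indicator_of_notMem (by simpa using hu)]
  simp

lemma indTop_diff {S : ℝ} (hS : 0 < S) {a : ℝ} (ha : 0 < a) {s : ℂ} (h5 : s.re < 5) :
    DifferentiableAt ℂ (mellin ((Set.Ioi a).indicator (hC S))) s :=
  mellin_differentiableAt_of_isBigO_rpow (b := s.re - 1)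
    (locInt_ind (continuous_hC S) measurableSet_Ioi)
    (indTop_O_top a (hC_O_top hS)) h5 (indTop_O_bot ha _) (by linarith)

lemma indBot_diff {f : ℝ → ℂ} (hf : Continuous f) (a : ℝ) {b : ℝ}
    (h : f =O[nhdsWithin 0 (Set.Ioi 0)] (fun x : ℝ => x ^ (-b))) {s : ℂ} (hs : b < s.re) :
    DifferentiableAt ℂ (mellin ((Set.Iic a).indicator f)) s :=
  mellin_differentiableAt_of_isBigO_rpow (a := s.re + 1)
    (locInt_ind hf measurableSet_Iic)
    (indBot_O_top a _) (by linarith) (indBot_O_bot a h) hs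

lemma indBot_conv {f : ℝ → ℂ} (hf : Continuous f) (a : ℝ) {b : ℝ}
    (h : f =O[nhdsWithin 0 (Set.Ioi 0)] (fun x : ℝ => x ^ (-b))) {s : ℂ} (hs : b < s.re) :
    MellinConvergent ((Set.Iic a).indicator f) s :=
  mellinConvergent_of_isBigO_rpow (a := s.re + 1)
    (locInt_ind hf measurableSet_Iic)
    (indBot_O_top a _) (by linarith) (indBot_O_bot a h) hs

/-- The constant in the main bound. -/
noncomputable def KK (S : ℝ) : ℝ := ∫ u in Set.Ioi (0 : ℝ), u * hh S u

lemma integrable_uhh {S : ℝ} (hS : 0 < S) : IntegrableOn (fun u => u * hh S u) (Set.Ioi 0) := by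
  have h := (hC_mellin hS (s := 2) (by norm_num) (by norm_num)).norm
  refine IntegrableOn.congr_fun h ?_ measurableSet_Ioi
  intro u hu
  have hu' : (0 : ℝ) < u := hu
  simp only [norm_smul, norm_hC]
  rw [Complex.norm_cpow_eq_rpow_re_of_pos hu']
  norm_num

lemma KK_nonneg (S : ℝ) : 0 ≤ KK S :=
  setIntegral_nonneg measurableSet_Ioi fun u hu => mul_nonneg (le_of_lt hu) (hh_pos S u).le

lemma indTop_bound {S : ℝ} (hS : 0 < S) {a : ℝ} (ha : 0 < a) {z : ℂ} (hz : 0 ≤ z.re) :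
    ‖mellin ((Set.Ioi a).indicator (hC S)) (2 - 2 * z)‖ ≤ a ^ (-2 * z.re) * KK S := by
  unfold mellin KK
  rw [← integral_const_mul]
  apply norm_integral_le_of_norm_le ((integrable_uhh hS).const_mul _)
  filter_upwards [ae_restrict_mem measurableSet_Ioi] with u hu
  have hu' : (0 : ℝ) < u := hu
  by_cases hua : a < u
  · rw [Set.indicator_of_mem (by exact hua), norm_smul, norm_hC,
      Complex.norm_cpow_eq_rpow_re_of_pos hu']
    have : (2 - 2 * z - 1).re = (-2 * z.re) + 1 := by simp; ring
    rw [this, Real.rpow_add hu', Real.rpow_one, mul_assoc]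
    apply mul_le_mul_of_nonneg_right _ (mul_nonneg hu'.le (hh_pos S u).le)
    exact Real.rpow_le_rpow_of_nonpos ha hua.le (by linarith)
  · rw [Set.indicator_of_notMem (by simpa using hua)]
    simp only [smul_zero, norm_zero]
    have := (hh_pos S u).le
    positivity

lemma indBot_bound {f : ℝ → ℂ} {C : ℝ} {N : ℕ}
    (hb : ∀ u, 0 < u → u ≤ 1 → ‖f u‖ ≤ C * u ^ (2 * N)) {a : ℝ} (ha : 0 < a) (ha1 : a ≤ 1)
    {z : ℂ} (hz : z.re ≤ 3 / 4) :
    ‖mellin ((Set.Iic a).indicator f) (2 - 2 * z)‖ ≤ 2 * C * a ^ (2 * N + 2 - 2 * z.re) := by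
  have hC : 0 ≤ C := by
    have := (norm_nonneg _).trans (hb 1 one_pos le_rfl)
    simpa using this
  have hN : (0 : ℝ) ≤ N := Nat.cast_nonneg N
  have hr : (0 : ℝ) < 2 * N + 2 - 2 * z.re := by linarith
  have hInt : ∫ u in Set.Ioc 0 a, u ^ (2 * N + 2 - 2 * z.re - 1) =
      a ^ (2 * N + 2 - 2 * z.re) / (2 * N + 2 - 2 * z.re) := by
    rw [← intervalIntegral.integral_of_le ha.le, integral_rpow (by left; linarith)]
    rw [Real.zero_rpow (by linarith)]
    simp
  have hii : IntegrableOn (fun u : ℝ => u ^ (2 * N + 2 - 2 * z.re - 1)) (Set.Ioc 0 a) := by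
    have := intervalIntegral.intervalIntegrable_rpow' (a := 0) (b := a)
      (r := 2 * N + 2 - 2 * z.re - 1) (by linarith)
    exact (intervalIntegrable_iff_integrableOn_Ioc_of_le ha.le).1 this
  have hset : Set.Ioi (0 : ℝ) ∩ Set.Iic a = Set.Ioc 0 a := by ext; simp
  have h2 : mellin ((Set.Iic a).indicator f) (2 - 2 * z) =
      ∫ u in Set.Ioc 0 a, (u : ℂ) ^ (2 - 2 * z - 1) • f u := by
    unfold mellin
    rw [← hset, ← setIntegral_indicator measurableSet_Iic]
    congr 1
    ext u
    by_cases h : u ∈ Set.Iic a <;> simp [Set.indicator, h]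
  rw [h2]
  calc _ ≤ ∫ u in Set.Ioc 0 a, C * u ^ (2 * N + 2 - 2 * z.re - 1) := by
        apply norm_integral_le_of_norm_le (hii.const_mul _)
        filter_upwards [ae_restrict_mem measurableSet_Ioc] with u hu
        have hu' : (0 : ℝ) < u := hu.1
        rw [norm_smul, Complex.norm_cpow_eq_rpow_re_of_pos hu']
        have e : (2 - 2 * z - 1).re = 1 - 2 * z.re := by simp; ring
        rw [e]
        have e2 : u ^ (2 * N + 2 - 2 * z.re - 1) = u ^ (1 - 2 * z.re) * u ^ (2 * N) := by
          rw [← Real.rpow_natCast u (2 * N), ← Real.rpow_add hu']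
          congr 1; push_cast; ring
        rw [e2]
        have := hb u hu' (hu.2.trans ha1)
        calc _ ≤ u ^ (1 - 2 * z.re) * (C * u ^ (2 * N)) := by gcongr
          _ = _ := by ring
    _ = C * (a ^ (2 * N + 2 - 2 * z.re) / (2 * N + 2 - 2 * z.re)) := by
        rw [integral_const_mul, hInt]
    _ ≤ C * (2 * a ^ (2 * N + 2 - 2 * z.re)) := by
        gcongr
        rw [div_le_iff₀ hr]
        have : (0 : ℝ) ≤ a ^ (2 * N + 2 - 2 * z.re) := by positivity
        nlinarith
    _ = _ := by ring

lemma indBot_pow (m : ℕ) {a : ℝ} (ha : 0 < a) {z : ℂ} (hz : z.re < 1) :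
    MellinConvergent ((Set.Iic a).indicator (fun u : ℝ => (u : ℂ) ^ (2 * m))) (2 - 2 * z) ∧
    mellin ((Set.Iic a).indicator (fun u : ℝ => (u : ℂ) ^ (2 * m))) (2 - 2 * z) =
      (a : ℂ) ^ (2 * m + 2 - 2 * z) / (2 * m + 2 - 2 * z) := by
  have hm : (0 : ℝ) ≤ m := Nat.cast_nonneg m
  constructor
  · apply indBot_conv (by fun_prop) a (b := 0)
    · apply Asymptotics.IsBigO.of_bound 1
      have : ∀ᶠ u : ℝ in nhdsWithin 0 (Set.Ioi 0), u < 1 :=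
        nhdsWithin_le_nhds (eventually_lt_nhds one_pos)
      filter_upwards [this, self_mem_nhdsWithin] with u hu hu0
      have hu0' : (0 : ℝ) < u := hu0
      simp only [norm_pow, Complex.norm_real, neg_zero, Real.rpow_zero, norm_one, mul_one,
        Real.norm_of_nonneg hu0'.le]
      exact pow_le_one₀ hu0'.le hu.le
    · simp; linarith
  have hset : Set.Ioi (0 : ℝ) ∩ Set.Iic a = Set.Ioc 0 a := by ext; simp
  have h2 : mellin ((Set.Iic a).indicator (fun u : ℝ => (u : ℂ) ^ (2 * m))) (2 - 2 * z) =
      ∫ u in Set.Ioc 0 a, (u : ℂ) ^ (2 * m + 1 - 2 * z) := by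
    unfold mellin
    rw [← hset, ← setIntegral_indicator measurableSet_Iic]
    apply setIntegral_congr_fun measurableSet_Ioi
    intro u hu
    have hu0 : (u : ℂ) ≠ 0 := by exact_mod_cast (ne_of_gt hu)
    by_cases h : u ∈ Set.Iic a
    · simp only [Set.indicator_of_mem h, smul_eq_mul]
      rw [← Complex.cpow_natCast, ← Complex.cpow_add _ _ hu0]
      congr 1; push_cast; ring
    · simp [Set.indicator_of_notMem h]
  rw [h2, ← intervalIntegral.integral_of_le ha.le, integral_cpow]
  · have : (2 * (m : ℂ) + 1 - 2 * z + 1) = 2 * m + 2 - 2 * z := by ring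
    rw [this, Complex.ofReal_zero, Complex.zero_cpow, sub_zero]
    intro h
    have := congrArg Complex.re h
    simp at this
    linarith
  · left; simp; linarith


/-! ### The Mellin transform of the profile -/

noncomputable def bC (x : ℝ) : ℂ := (((1 + x) ^ (-(5 : ℝ) / 2) : ℝ) : ℂ)

lemma mellin_bC {s : ℂ} (h0 : 0 < s.re) (h1 : s.re < 5 / 2) :
    mellin bC s = Complex.Gamma s * Complex.Gamma (5 / 2 - s) / Complex.Gamma (5 / 2) := by
  have hbeta := Complex.betaIntegral_eq_Gamma_mul_div s (5 / 2 - s) h0 (by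
    simp only [Complex.sub_re]; norm_num; linarith)
  rw [add_sub_cancel] at hbeta
  rw [← hbeta]
  unfold mellin Complex.betaIntegral
  have himg : Set.image (fun t : ℝ => t / (1 - t)) (Set.Ioo 0 1) = Set.Ioi 0 := by
    ext x
    simp only [Set.mem_image, Set.mem_Ioo, Set.mem_Ioi]
    constructor
    · rintro ⟨t, ⟨h0, h1⟩, rfl⟩
      exact div_pos h0 (by linarith)
    · intro hx
      refine ⟨x / (1 + x), ⟨by positivity, ?_⟩, ?_⟩
      · rw [div_lt_one (by linarith)]; linarith
      · have : (1 + x) ≠ 0 := by positivity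
        field_simp
        ring
  rw [← himg, integral_image_eq_integral_abs_deriv_smul (f' := fun t => 1 / (1 - t) ^ 2)
    measurableSet_Ioo]
  · rw [intervalIntegral.integral_of_le zero_le_one, integral_Ioc_eq_integral_Ioo]
    apply setIntegral_congr_fun measurableSet_Ioo
    intro t ht
    have ht0 : (0 : ℝ) < t := ht.1
    have ht1 : (0 : ℝ) < 1 - t := by linarith [ht.2]
    have hne : ((1 - t : ℝ) : ℂ) ≠ 0 := by exact_mod_cast ht1.ne'
    simp only [bC, smul_eq_mul, Complex.real_smul]
    have e1 : 1 + t / (1 - t) = (1 - t)⁻¹ := by field_simp; ring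
    rw [e1, abs_of_pos (by positivity), Complex.ofReal_cpow (by positivity),
      Complex.ofReal_div t, div_eq_mul_inv (t : ℂ), ← Complex.ofReal_inv,
      Complex.mul_cpow_ofReal_nonneg ht0.le (by positivity)]
    have inv_c : ∀ w : ℂ, (((1 - t)⁻¹ : ℝ) : ℂ) ^ w = ((1 - t : ℝ) : ℂ) ^ (-w) := by
      intro w
      rw [Complex.ofReal_inv, Complex.inv_cpow, Complex.cpow_neg]
      rw [Complex.arg_ofReal_of_nonneg ht1.le]; exact Real.pi_pos.ne
    rw [inv_c, inv_c]
    have e2 : ((1 / (1 - t) ^ 2 : ℝ) : ℂ) = ((1 - t : ℝ) : ℂ) ^ (-2 : ℂ) := by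
      rw [Complex.cpow_neg, Complex.cpow_ofNat]; push_cast; rw [one_div]
    have e3 : (1 - (t : ℂ)) = ((1 - t : ℝ) : ℂ) := by push_cast; rfl
    rw [e2, e3]
    rw [show ((1 - t : ℝ) : ℂ) ^ (5 / 2 - s - 1) =
      ((1 - t : ℝ) : ℂ) ^ (-2 : ℂ) * ((1 - t : ℝ) : ℂ) ^ (-(s - 1)) *
      ((1 - t : ℝ) : ℂ) ^ (-((-(5 : ℝ) / 2 : ℝ) : ℂ)) by
        rw [← Complex.cpow_add _ _ hne, ← Complex.cpow_add _ _ hne]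
        congr 1; push_cast; ring]
    ring
  · intro t ht
    have ht1 : (1 : ℝ) - t ≠ 0 := by linarith [ht.2]
    have := ((hasDerivAt_id t).div ((hasDerivAt_const t (1 : ℝ)).sub (hasDerivAt_id t)) ht1)
    refine (this.congr_deriv ?_).hasDerivWithinAt
    simp
  · intro x hx y hy hxy
    have hx1 : (1 : ℝ) - x ≠ 0 := by linarith [hx.2]
    have hy1 : (1 : ℝ) - y ≠ 0 := by linarith [hy.2]
    simp only at hxy
    rw [div_eq_div_iff hx1 hy1] at hxy
    linarith

noncomputable def Mdef (S : ℝ) (z : ℂ) : ℂ :=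
  (S : ℂ) ^ (2 * z - 2) * ((1 / 2) *
    (Complex.Gamma (1 - z) * Complex.Gamma (3 / 2 + z) / Complex.Gamma (5 / 2)))

lemma mellin_hC {S : ℝ} (hS : 0 < S) {z : ℂ} (h0 : -(3 / 2) < z.re) (h1 : z.re < 1) :
    mellin (hC S) (2 - 2 * z) = Mdef S z := by
  have e : hC S = fun t => (fun x : ℝ => bC (x ^ (2 : ℝ))) (S * t) := by
    ext t
    simp only [hC, hh, bC, Real.rpow_two, mul_pow, mul_comm]
  rw [e, mellin_comp_mul_left (fun x : ℝ => bC (x ^ (2 : ℝ))) _ hS, mellin_comp_rpow]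
  have e2 : (2 - 2 * z) / ((2 : ℝ) : ℂ) = 1 - z := by push_cast; ring
  rw [e2, mellin_bC (by simp; linarith) (by simp; linarith)]
  unfold Mdef
  rw [show -(2 - 2 * z) = 2 * z - 2 by ring, show 5 / 2 - (1 - z) = 3 / 2 + z by ring]
  simp

lemma meromorphic_Gamma (z : ℂ) : MeromorphicAt Complex.Gamma z := by
  have : AnalyticAt ℂ (fun s => (Complex.Gamma s)⁻¹) z :=
    Complex.differentiable_one_div_Gamma.analyticAt z
  have h := this.meromorphicAt.inv
  have e : (fun s => (Complex.Gamma s)⁻¹)⁻¹ = Complex.Gamma := by ext s; simp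
  rwa [e] at h

lemma analytic_cpow_const {a : ℂ} (ha : a ≠ 0) {f : ℂ → ℂ} {z : ℂ} (hf : AnalyticAt ℂ f z) :
    AnalyticAt ℂ (fun s => a ^ f s) z := by
  have : (fun s => a ^ f s) = fun s => Complex.exp (Complex.log a * f s) := by
    ext s; rw [Complex.cpow_def_of_ne_zero ha]
  rw [this]
  exact AnalyticAt.cexp (analyticAt_const.mul hf)

lemma meromorphic_Mdef {S : ℝ} (hS : 0 < S) (z : ℂ) : MeromorphicAt (Mdef S) z := by
  unfold Mdef
  have h1 : MeromorphicAt (fun z => Complex.Gamma (1 - z)) z :=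
    (meromorphic_Gamma (1 - z)).comp_analyticAt (f := Complex.Gamma) (g := fun z => 1 - z) (by fun_prop)
  have h2 : MeromorphicAt (fun z => Complex.Gamma (3 / 2 + z)) z :=
    (meromorphic_Gamma (3 / 2 + z)).comp_analyticAt (f := Complex.Gamma) (g := fun z => 3 / 2 + z) (by fun_prop)
  refine MeromorphicAt.mul ?_ ((MeromorphicAt.const _ _).mul ((h1.mul h2).div (MeromorphicAt.const _ _)))
  exact (analytic_cpow_const (by exact_mod_cast hS.ne') (by fun_prop)).meromorphicAt

lemma meromorphic_zeta (z : ℂ) : MeromorphicAt riemannZeta z := by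
  have h : MeromorphicAt (fun s => (s - 1)⁻¹ + riemannZeta₀ s) z :=
    MeromorphicAt.add (by fun_prop) (differentiable_riemannZeta₀.analyticAt z).meromorphicAt
  refine h.congr ?_
  have : ∀ᶠ s in nhdsWithin z {z}ᶜ, s ≠ 1 := by
    by_cases hz : z = 1
    · subst hz; exact self_mem_nhdsWithin
    · exact nhdsWithin_le_nhds (isOpen_ne.mem_nhds hz)
  filter_upwards [this] with s hs
  rw [riemannZeta_eq_inv_sub_add hs]

lemma Gamma_three_half : Complex.Gamma (3 / 2) = (Real.sqrt Real.pi : ℂ) / 2 := by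
  have h := Complex.Gamma_add_one (1 / 2) (by norm_num)
  have h2 : Complex.Gamma (1 / 2) = (Real.sqrt Real.pi : ℂ) := by
    have := Complex.Gamma_ofReal (1 / 2)
    rw [Real.Gamma_one_half_eq] at this
    simpa using this
  rw [h2] at h
  rw [show (3 / 2 : ℂ) = 1 / 2 + 1 by norm_num, h]; ring

lemma Gamma_five_half : Complex.Gamma (5 / 2) = 3 * (Real.sqrt Real.pi : ℂ) / 4 := by
  have h := Complex.Gamma_add_one (3 / 2) (by norm_num)
  rw [show (5 / 2 : ℂ) = 3 / 2 + 1 by norm_num, h, Gamma_three_half]; ring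

lemma hasDerivAt_Gamma_three_half : HasDerivAt Complex.Gamma
    ((Real.sqrt Real.pi : ℂ) * (1 - (Real.eulerMascheroniConstant + 2 * Real.log 2) / 2)) (3 / 2) := by
  have h := Complex.hasDerivAt_Gamma_one_half
  have h2 : Complex.Gamma (1 / 2) = (Real.sqrt Real.pi : ℂ) := by
    have := Complex.Gamma_ofReal (1 / 2)
    rw [Real.Gamma_one_half_eq] at this
    simpa using this
  have h3 : HasDerivAt (fun s => (s - 1) * Complex.Gamma (s - 1))
    (1 * Complex.Gamma (3 / 2 - 1) + (3 / 2 - 1) * (-(Real.sqrt Real.pi : ℂ) *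
      (Real.eulerMascheroniConstant + 2 * Real.log 2))) (3 / 2 : ℂ) := by
    refine HasDerivAt.mul ((hasDerivAt_id _).sub_const 1) ?_
    apply HasDerivAt.comp_sub_const (f := Complex.Gamma)
    rw [show (3 / 2 - 1 : ℂ) = 1 / 2 by norm_num]
    simpa using h
  rw [show (3 / 2 - 1 : ℂ) = 1 / 2 by norm_num, h2] at h3
  refine (h3.congr_deriv (by ring)).congr_of_eventuallyEq ?_
  filter_upwards [isOpen_ne.mem_nhds (show (3 / 2 : ℂ) ≠ 1 by norm_num)] with s hs
  rw [← Complex.Gamma_add_one _ (sub_ne_zero.2 hs)]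
  simp

lemma Mdef_zero {S : ℝ} (hS : 0 < S) : Mdef S 0 = 1 / (3 * (S : ℂ) ^ 2) := by
  have hp : (Real.sqrt Real.pi : ℂ) ≠ 0 := by exact_mod_cast (Real.sqrt_pos.2 Real.pi_pos).ne'
  have hS' : (S : ℂ) ≠ 0 := by exact_mod_cast hS.ne'
  unfold Mdef
  rw [show (2 * 0 - 2 : ℂ) = -2 by norm_num, Complex.cpow_neg, Complex.cpow_ofNat, sub_zero, add_zero,
    Complex.Gamma_one, Gamma_three_half, Gamma_five_half]
  field_simp
  norm_num

lemma hasDerivAt_Mdef_zero {S : ℝ} (hS : 0 < S) : HasDerivAt (Mdef S)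
    (1 / (3 * (S : ℂ) ^ 2) * (2 * Real.log S + 2 - 2 * Real.log 2)) 0 := by
  have hp : (Real.sqrt Real.pi : ℂ) ≠ 0 := by exact_mod_cast (Real.sqrt_pos.2 Real.pi_pos).ne'
  have hS' : (S : ℂ) ≠ 0 := by exact_mod_cast hS.ne'
  have h1 : HasDerivAt (fun z : ℂ => (S : ℂ) ^ (2 * z - 2))
      ((S : ℂ) ^ (2 * (0 : ℂ) - 2) * Complex.log S * (2 * 1)) 0 := by
    apply HasDerivAt.const_cpow
    · exact ((hasDerivAt_id _).const_mul 2).sub_const 2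
    · left; exact hS'
  have h2 : HasDerivAt (fun z : ℂ => Complex.Gamma (1 - z)) (-(-(Real.eulerMascheroniConstant : ℂ))) 0 := by
    apply HasDerivAt.comp_const_sub
    simpa using Complex.hasDerivAt_Gamma_one
  have h3 : HasDerivAt (fun z : ℂ => Complex.Gamma (3 / 2 + z)) ((Real.sqrt Real.pi : ℂ) * (1 - (Real.eulerMascheroniConstant + 2 * Real.log 2) / 2)) 0 := by
    apply HasDerivAt.comp_const_add
    simpa using hasDerivAt_Gamma_three_half
  have h4 := h1.mul (((h2.mul h3).div_const (Complex.Gamma (5 / 2))).const_mul (1 / 2))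
  refine h4.congr_deriv ?_
  simp only [Pi.mul_apply]
  rw [show (2 * 0 - 2 : ℂ) = -2 by norm_num, Complex.cpow_neg, Complex.cpow_ofNat, sub_zero, add_zero,
    Complex.Gamma_one, Gamma_three_half, Gamma_five_half, ← Complex.ofReal_log hS.le]
  field_simp
  ring


/-! ### The `k`-terms -/

noncomputable def aa (ω : ℕ) (δ : ℝ) (k : ℕ) : ℝ := ((k : ℝ) + 1) ^ (δ - 1) / ω

noncomputable def wt (ω : ℕ) (k : ℕ) (z : ℂ) : ℂ :=
  (((((k : ℝ) + 1) * ω : ℝ)) : ℂ) ^ (-(2 * z + 1))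

noncomputable def Ik (ω : ℕ) (δ S : ℝ) (k : ℕ) (z : ℂ) : ℂ :=
  wt ω k z * mellin ((Set.Ioi (aa ω δ k)).indicator (hC S)) (2 - 2 * z)

noncomputable def cc (η : ℝ) : ℝ := (5 - Real.cosh η ^ 2) * Real.cosh η * Real.sinh η ^ 2 / 8

noncomputable def wj (s : ℂ) (j : ℕ) : ℂ := pochSym s j / ((Nat.factorial j : ℂ) * 4 ^ j)

lemma kpos (k : ℕ) : (0 : ℝ) < (k : ℝ) + 1 := by positivity

lemma wpos {ω : ℕ} (hω : 1 ≤ ω) : (0 : ℝ) < ω := by exact_mod_cast hω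

lemma aa_pos {ω : ℕ} (hω : 1 ≤ ω) (δ : ℝ) (k : ℕ) : 0 < aa ω δ k :=
  div_pos (Real.rpow_pos_of_pos (kpos k) _) (wpos hω)

lemma aa_le {ω : ℕ} (hω : 1 ≤ ω) (δ : ℝ) (k : ℕ) : aa ω δ k ≤ ((k : ℝ) + 1) ^ (δ - 1) :=
  div_le_self (Real.rpow_nonneg (kpos k).le _) (by exact_mod_cast hω)

lemma aa_le_one {ω : ℕ} (hω : 1 ≤ ω) {δ : ℝ} (hδ : δ < 1) (k : ℕ) : aa ω δ k ≤ 1 :=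
  (aa_le hω δ k).trans (Real.rpow_le_one_of_one_le_of_nonpos (by simp) (by linarith))

lemma kwa {ω : ℕ} (hω : 1 ≤ ω) (δ : ℝ) (k : ℕ) :
    ((k : ℝ) + 1) * ω * aa ω δ k = ((k : ℝ) + 1) ^ δ := by
  have := (wpos hω).ne'
  unfold aa
  rw [Real.rpow_sub_one (kpos k).ne']
  have := (kpos k).ne'
  field_simp

lemma Omega1Term_eq {ω : ℕ} (hω : 1 ≤ ω) (η δ : ℝ) (k j : ℕ) (s : ℂ) :
    Omega1Term ω η δ (k + 1) j s = (2 * Complex.sin ((Real.pi : ℂ) * s) / (Real.pi : ℂ)) *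
      ((cc η : ℂ) * (wj s j * Ik ω δ (Real.sinh η) k (s + j))) := by
  have hInt : ∫ u in Set.Ioi ((((k + 1 : ℕ) : ℝ)) ^ (δ - 1) / ω),
      (u : ℂ) ^ (-(2 * s) - 2 * (j : ℂ)) * ((coneA1 η u : ℝ) : ℂ) =
      (cc η : ℂ) * mellin ((Set.Ioi (aa ω δ k)).indicator (hC (Real.sinh η))) (2 - 2 * (s + j)) := by
    unfold mellin
    rw [← integral_const_mul]
    have ea : (((k + 1 : ℕ) : ℝ)) ^ (δ - 1) / ω = aa ω δ k := by
      unfold aa; push_cast; rfl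
    rw [ea]
    have hset : Set.Ioi (0 : ℝ) ∩ Set.Ioi (aa ω δ k) = Set.Ioi (aa ω δ k) := by
      rw [Set.inter_eq_right]
      intro x hx
      exact (aa_pos hω δ k).trans hx
    conv_lhs => rw [← hset]
    rw [← setIntegral_indicator measurableSet_Ioi]
    apply setIntegral_congr_fun measurableSet_Ioi
    intro u hu
    have hu0 : (u : ℂ) ≠ 0 := by exact_mod_cast (ne_of_gt hu)
    by_cases h : u ∈ Set.Ioi (aa ω δ k)
    · simp only [Set.indicator_of_mem h, smul_eq_mul]
      have e : (2 - 2 * (s + j) - 1 : ℂ) = (-(2 * s) - 2 * (j : ℂ)) + 1 := by ring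
      rw [e, Complex.cpow_add _ _ hu0, Complex.cpow_one]
      have : coneA1 η u = cc η * (u * hh (Real.sinh η) u) := rfl
      rw [this, hC]
      push_cast
      ring
    · simp [Set.indicator_of_notMem h]
  unfold Omega1Term Ik
  rw [hInt]
  have : (((k + 1 : ℕ) : ℝ) * (ω : ℝ) : ℝ) = (((k : ℝ) + 1) * ω : ℝ) := by push_cast; rfl
  rw [this, show -(2 * s + 2 * (j : ℂ) + 1) = -(2 * (s + j) + 1) by ring]
  unfold wt wj
  ring

lemma wt_diff {ω : ℕ} (hω : 1 ≤ ω) (k : ℕ) : Differentiable ℂ (wt ω k) := by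
  intro z
  have h : ((((k : ℝ) + 1) * ω : ℝ) : ℂ) ≠ 0 := by
    exact_mod_cast (mul_pos (kpos k) (wpos hω)).ne'
  exact (analytic_cpow_const h (by fun_prop)).differentiableAt

lemma Ik_diff {ω : ℕ} (hω : 1 ≤ ω) (δ : ℝ) {S : ℝ} (hS : 0 < S) (k : ℕ) {z : ℂ} (hz : 0 < z.re) :
    DifferentiableAt ℂ (Ik ω δ S k) z := by
  unfold Ik
  refine (wt_diff hω k z).mul ?_
  exact DifferentiableAt.comp z (g := mellin ((Set.Ioi (aa ω δ k)).indicator (hC S)))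
    (f := fun z : ℂ => 2 - 2 * z) (indTop_diff hS (aa_pos hω δ k) (by simp; linarith)) (by fun_prop)

lemma norm_wt {ω : ℕ} (hω : 1 ≤ ω) (k : ℕ) (z : ℂ) :
    ‖wt ω k z‖ = (((k : ℝ) + 1) * ω) ^ (-2 * z.re) * (((k : ℝ) + 1) * ω)⁻¹ := by
  have h := mul_pos (kpos k) (wpos hω)
  unfold wt
  rw [Complex.norm_cpow_eq_rpow_re_of_pos h]
  have : (-(2 * z + 1)).re = -2 * z.re + (-1) := by simp; ring
  rw [this, Real.rpow_add h, Real.rpow_neg_one]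

lemma wt_aa {ω : ℕ} (hω : 1 ≤ ω) (δ : ℝ) (k : ℕ) (z : ℂ) :
    ‖wt ω k z‖ * aa ω δ k ^ (-2 * z.re) ≤ ((k : ℝ) + 1) ^ (-1 - 2 * δ * z.re) := by
  have h := mul_pos (kpos k) (wpos hω)
  have ha := aa_pos hω δ k
  rw [norm_wt hω, mul_right_comm, ← Real.mul_rpow h.le ha.le, kwa hω, ← Real.rpow_mul (kpos k).le]
  rw [show -1 - 2 * δ * z.re = δ * (-2 * z.re) + (-1) by ring, Real.rpow_add (kpos k),
    Real.rpow_neg_one]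
  apply mul_le_mul_of_nonneg_left _ (Real.rpow_nonneg (kpos k).le _)
  apply inv_anti₀ (kpos k)
  have : (1 : ℝ) ≤ ω := by exact_mod_cast hω
  nlinarith [kpos k]

lemma Ik_bound {ω : ℕ} (hω : 1 ≤ ω) (δ : ℝ) {S : ℝ} (hS : 0 < S) (k : ℕ) {z : ℂ} (hz : 0 ≤ z.re) :
    ‖Ik ω δ S k z‖ ≤ KK S * ((k : ℝ) + 1) ^ (-1 - 2 * δ * z.re) := by
  unfold Ik
  rw [norm_mul]
  calc _ ≤ ‖wt ω k z‖ * (aa ω δ k ^ (-2 * z.re) * KK S) := by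
        gcongr; exact indTop_bound hS (aa_pos hω δ k) hz
    _ = KK S * (‖wt ω k z‖ * aa ω δ k ^ (-2 * z.re)) := by ring
    _ ≤ _ := by
        apply mul_le_mul_of_nonneg_left (wt_aa hω δ k z) (KK_nonneg S)

lemma summable_kpow {r : ℝ} (hr : r < -1) : Summable (fun k : ℕ => ((k : ℝ) + 1) ^ r) := by
  have := (summable_nat_add_iff 1).2 (Real.summable_nat_rpow.2 hr)
  simpa using this

/-- sums of `I_k` -/
noncomputable def GG (ω : ℕ) (δ S : ℝ) (z : ℂ) : ℂ := ∑' k, Ik ω δ S k z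

lemma Ik_bound' {ω : ℕ} (hω : 1 ≤ ω) {δ : ℝ} (hδ : 0 < δ) {S : ℝ} (hS : 0 < S) (k : ℕ) {z : ℂ}
    {ε : ℝ} (hε : 0 < ε) (hz : ε ≤ z.re) :
    ‖Ik ω δ S k z‖ ≤ KK S * ((k : ℝ) + 1) ^ (-1 - 2 * δ * ε) := by
  refine (Ik_bound hω δ hS k (by linarith)).trans ?_
  apply mul_le_mul_of_nonneg_left _ (KK_nonneg S)
  apply Real.rpow_le_rpow_of_exponent_le (by simp)
  nlinarith

lemma Ik_summable {ω : ℕ} (hω : 1 ≤ ω) {δ : ℝ} (hδ : 0 < δ) {S : ℝ} (hS : 0 < S) {z : ℂ}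
    (hz : 0 < z.re) : Summable (fun k => Ik ω δ S k z) := by
  refine Summable.of_norm_bounded (g := fun k : ℕ => KK S * ((k : ℝ) + 1) ^ (-1 - 2 * δ * z.re)) ?_
    (fun k => Ik_bound' hω hδ hS k hz le_rfl)
  exact (summable_kpow (by nlinarith)).mul_left _

lemma GG_diff {ω : ℕ} (hω : 1 ≤ ω) {δ : ℝ} (hδ : 0 < δ) {S : ℝ} (hS : 0 < S) {z : ℂ}
    (hz : 0 < z.re) : AnalyticAt ℂ (GG ω δ S) z := by
  have hopen : IsOpen {w : ℂ | z.re / 2 < w.re} := isOpen_lt continuous_const Complex.continuous_re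
  have : DifferentiableOn ℂ (fun w => ∑' k, Ik ω δ S k w) {w : ℂ | z.re / 2 < w.re} := by
    apply Complex.differentiableOn_tsum_of_summable_norm
      (u := fun k : ℕ => KK S * ((k : ℝ) + 1) ^ (-1 - 2 * δ * (z.re / 2)))
    · exact (summable_kpow (by nlinarith)).mul_left _
    · intro k w hw
      exact (Ik_diff hω δ hS k (lt_trans (by linarith) hw)).differentiableWithinAt
    · exact hopen
    · intro k w hw
      exact Ik_bound' hω hδ hS k (by linarith) (le_of_lt hw)
  exact this.analyticAt (hopen.mem_nhds (by simp; linarith))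

/-! ### The tails in `j` -/

noncomputable def pp (B : ℝ) (j : ℕ) : ℝ :=
  (∏ i ∈ Finset.range j, (B + i)) / ((Nat.factorial j : ℝ) * 4 ^ j)

lemma pp_pos {B : ℝ} (hB : 0 < B) (j : ℕ) : 0 < pp B j := by
  unfold pp
  have : 0 < ∏ i ∈ Finset.range j, (B + i) := Finset.prod_pos (fun i _ => by positivity)
  positivity

lemma pp_summable {B : ℝ} (hB : 0 < B) : Summable (pp B) := by
  apply summable_of_ratio_test_tendsto_lt_one (l := 1 / 4) (by norm_num)
  · exact Eventually.of_forall fun j => (pp_pos hB j).ne'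
  · have : ∀ j : ℕ, ‖pp B (j + 1)‖ / ‖pp B j‖ = 1 / 4 + ((B - 1) / 4) * (1 / ((j : ℝ) + 1)) := by
      intro j
      rw [Real.norm_of_nonneg (pp_pos hB _).le, Real.norm_of_nonneg (pp_pos hB _).le]
      have : (∏ i ∈ Finset.range j, (B + i)) ≠ 0 :=
        (Finset.prod_pos (fun i _ => by positivity)).ne'
      have h2 : ((Nat.factorial j : ℕ) : ℝ) ≠ 0 := by positivity
      have h3 := (kpos j).ne'
      unfold pp
      rw [Finset.prod_range_succ, Nat.factorial_succ, pow_succ]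
      push_cast
      field_simp
      ring
    simp_rw [this]
    have h := (tendsto_one_div_add_atTop_nhds_zero_nat (𝕜 := ℝ)).const_mul ((B - 1) / 4)
    have h' := h.const_add (1 / 4)
    rwa [mul_zero, add_zero] at h'

lemma wj_bound {s : ℂ} {B : ℝ} (hs : ‖s‖ ≤ B) (j : ℕ) : ‖wj s j‖ ≤ pp B j := by
  unfold wj pp pochSym
  rw [norm_div, norm_mul, norm_prod, norm_pow]
  simp only [Complex.norm_natCast, Complex.norm_ofNat]
  gcongr with i hi
  refine (norm_add_le _ _).trans ?_
  simpa using hs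

lemma wj_diff (j : ℕ) : Differentiable ℂ (fun s => wj s j) := by
  unfold wj pochSym
  apply Differentiable.div_const
  apply Differentiable.fun_finsetProd
  intro i _
  fun_prop

noncomputable def TT (ω : ℕ) (δ S : ℝ) (J : ℕ) (p : ℕ × ℕ) (s : ℂ) : ℂ :=
  wj s (p.2 + J) * Ik ω δ S p.1 (s + (p.2 + J : ℕ))

noncomputable def TTb (δ S : ℝ) (J : ℕ) (B ε : ℝ) (p : ℕ × ℕ) : ℝ :=
  (KK S * ((p.1 : ℝ) + 1) ^ (-1 - 2 * δ * ε)) * pp B (p.2 + J)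

lemma TTb_summable {δ : ℝ} (hδ : 0 < δ) (S : ℝ) (J : ℕ) {B ε : ℝ} (hB : 0 < B) (hε : 0 < ε) :
    Summable (TTb δ S J B ε) := by
  have h1 : Summable (fun k : ℕ => KK S * ((k : ℝ) + 1) ^ (-1 - 2 * δ * ε)) :=
    (summable_kpow (by nlinarith)).mul_left _
  have h2 : Summable (fun j => pp B (j + J)) := (summable_nat_add_iff J).2 (pp_summable hB)
  exact h1.mul_of_nonneg h2 (fun k => mul_nonneg (KK_nonneg S) (Real.rpow_nonneg (kpos k).le _))
    (fun j => (pp_pos hB _).le)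

lemma TT_bound {ω : ℕ} (hω : 1 ≤ ω) {δ : ℝ} (hδ : 0 < δ) {S : ℝ} (hS : 0 < S) (J : ℕ)
    {B ε : ℝ} (hε : 0 < ε) {s : ℂ} (hs : ‖s‖ ≤ B) (hs2 : ε ≤ s.re + J) (p : ℕ × ℕ) :
    ‖TT ω δ S J p s‖ ≤ TTb δ S J B ε p := by
  unfold TT TTb
  rw [norm_mul, mul_comm]
  have h1 := wj_bound hs (p.2 + J)
  have h2 : ‖Ik ω δ S p.1 (s + (p.2 + J : ℕ))‖ ≤ KK S * ((p.1 : ℝ) + 1) ^ (-1 - 2 * δ * ε) := by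
    apply Ik_bound' hω hδ hS _ hε
    have : (0 : ℝ) ≤ p.2 := Nat.cast_nonneg _
    simp; linarith
  exact mul_le_mul h2 h1 (norm_nonneg _) ((norm_nonneg _).trans h2)

lemma TT_diff {ω : ℕ} (hω : 1 ≤ ω) {δ : ℝ} {S : ℝ} (hS : 0 < S) (J : ℕ)
    (p : ℕ × ℕ) {s : ℂ} (hs : 0 < s.re + J) : DifferentiableAt ℂ (TT ω δ S J p) s := by
  unfold TT
  refine (wj_diff _ s).mul ?_
  refine DifferentiableAt.comp s (g := Ik ω δ S p.1) (f := fun s : ℂ => s + (p.2 + J : ℕ))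
    (Ik_diff hω δ hS _ ?_) (by fun_prop)
  have : (0 : ℝ) ≤ p.2 := Nat.cast_nonneg _
  simp; linarith

/-- neighbourhoods on which the bounds are uniform -/
def UU (J : ℕ) (B ε : ℝ) : Set ℂ := {s : ℂ | ‖s‖ < B ∧ ε < s.re + J}

lemma UU_open (J : ℕ) (B ε : ℝ) : IsOpen (UU J B ε) :=
  (isOpen_lt continuous_norm continuous_const).inter
    (isOpen_lt continuous_const (Complex.continuous_re.add continuous_const))

noncomputable def VV (ω : ℕ) (δ S : ℝ) (J : ℕ) (s : ℂ) : ℂ := ∑' p, TT ω δ S J p s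

lemma VV_analytic {ω : ℕ} (hω : 1 ≤ ω) {δ : ℝ} (hδ : 0 < δ) {S : ℝ} (hS : 0 < S) (J : ℕ)
    {s : ℂ} (hs : 0 < s.re + J) : AnalyticAt ℂ (VV ω δ S J) s := by
  have hB : 0 < ‖s‖ + 1 := by positivity
  have : DifferentiableOn ℂ (fun w => ∑' p, TT ω δ S J p w) (UU J (‖s‖ + 1) ((s.re + J) / 2)) := by
    apply Complex.differentiableOn_tsum_of_summable_norm
      (TTb_summable hδ S J hB (ε := (s.re + J) / 2) (by linarith)) _ (UU_open _ _ _)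
    · intro p w hw
      exact TT_bound hω hδ hS J (by linarith) hw.1.le hw.2.le p
    · intro p w hw
      exact (TT_diff hω hS J p (lt_trans (by linarith) hw.2)).differentiableWithinAt
  exact this.analyticAt ((UU_open _ _ _).mem_nhds ⟨by linarith, by linarith⟩)

lemma TT_summable {ω : ℕ} (hω : 1 ≤ ω) {δ : ℝ} (hδ : 0 < δ) {S : ℝ} (hS : 0 < S) (J : ℕ)
    {s : ℂ} (hs : 0 < s.re + J) : Summable (fun p => ‖TT ω δ S J p s‖) :=
  Summable.of_nonneg_of_le (fun _ => norm_nonneg _)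
    (fun p => TT_bound hω hδ hS J hs (le_add_of_nonneg_right zero_le_one) le_rfl p)
    (TTb_summable hδ S J (by positivity : (0 : ℝ) < ‖s‖ + 1) hs)

lemma VV_eq {ω : ℕ} (hω : 1 ≤ ω) {δ : ℝ} (hδ : 0 < δ) {S : ℝ} (hS : 0 < S) (J : ℕ)
    {s : ℂ} (hs : 0 < s.re + J) :
    HasSum (fun j : ℕ => wj s (j + J) * GG ω δ S (s + (j + J : ℕ))) (VV ω δ S J s) := by
  have h1 : HasSum (fun p => TT ω δ S J p s) (VV ω δ S J s) :=
    (TT_summable hω hδ hS J hs).of_norm.hasSum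
  have h2 : HasSum (fun p : ℕ × ℕ => TT ω δ S J p.swap s) (VV ω δ S J s) :=
    (Equiv.prodComm ℕ ℕ).hasSum_iff.2 h1
  refine h2.prod_fiberwise (fun j => ?_)
  simp only [Prod.swap_prod_mk, TT]
  apply HasSum.mul_left
  apply (Ik_summable hω hδ hS _).hasSum
  have : (0 : ℝ) ≤ j := Nat.cast_nonneg _
  simp; linarith

lemma VV_split {ω : ℕ} (hω : 1 ≤ ω) {δ : ℝ} (hδ : 0 < δ) {S : ℝ} (hS : 0 < S) (J : ℕ)
    {s : ℂ} (hs : 0 < s.re) :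
    VV ω δ S 0 s = ∑ j ∈ Finset.range J, wj s j * GG ω δ S (s + j) + VV ω δ S J s := by
  have h0 := VV_eq hω hδ hS 0 (s := s) (by simpa using hs)
  have h1 := VV_eq hω hδ hS J (s := s) (by positivity)
  have h2 := (hasSum_nat_add_iff (f := fun j : ℕ => wj s j * GG ω δ S (s + j)) J).1 h1
  simp only [add_zero] at h0
  rw [h0.unique h2, add_comm]


/-! ### Taylor expansion at zero -/

noncomputable def fN (S : ℝ) (c : ℕ → ℝ) (N : ℕ) (u : ℝ) : ℂ :=
  hC S u - ∑ m ∈ Finset.range N, (c m : ℂ) * (u : ℂ) ^ (2 * m)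

lemma fN_cont (S : ℝ) (c : ℕ → ℝ) (N : ℕ) : Continuous (fN S c N) := by
  unfold fN
  refine (continuous_hC S).sub ?_
  fun_prop

lemma exists_taylor (S : ℝ) (N : ℕ) : ∃ (c : ℕ → ℝ) (C : ℝ),
    ∀ u, 0 < u → u ≤ 1 → ‖fN S c N u‖ ≤ C * u ^ (2 * N) := by
  rcases N with _ | n
  · refine ⟨0, 1, fun u _ _ => ?_⟩
    simpa [fN, norm_hC] using hh_le_one S u
  · let g : ℝ → ℝ := fun x => (1 + x * S ^ 2) ^ (-(5 : ℝ) / 2)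
    have hg : ContDiffOn ℝ (n + 1) g (Set.Icc 0 1) := by
      apply ContDiffOn.rpow_const_of_ne
      · fun_prop
      · intro x hx
        have := mul_nonneg hx.1 (sq_nonneg S)
        linarith
    obtain ⟨C, hC⟩ := exists_taylor_mean_remainder_bound (zero_le_one) hg
    refine ⟨fun k => ((Nat.factorial k : ℝ))⁻¹ * iteratedDerivWithin k g (Set.Icc 0 1) 0, C, ?_⟩
    intro u hu hu1
    have h := hC (u ^ 2) ⟨by positivity, pow_le_one₀ hu.le hu1⟩
    rw [taylor_within_apply, sub_zero, ← pow_mul] at h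
    refine le_trans (le_of_eq ?_) h
    rw [← Complex.norm_real]
    congr 1
    unfold fN
    push_cast
    congr 1
    apply Finset.sum_congr rfl
    intro m _
    simp only [smul_eq_mul]
    push_cast
    ring

/-! ### Continuation of `GG` -/

noncomputable def Ek (ω : ℕ) (δ S : ℝ) (c : ℕ → ℝ) (N : ℕ) (k : ℕ) (z : ℂ) : ℂ :=
  wt ω k z * mellin ((Set.Iic (aa ω δ k)).indicator (fN S c N)) (2 - 2 * z)

noncomputable def EE (ω : ℕ) (δ S : ℝ) (c : ℕ → ℝ) (N : ℕ) (z : ℂ) : ℂ :=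
  ∑' k, Ek ω δ S c N k z

def strip (N : ℕ) : Set ℂ := {z : ℂ | -((N : ℝ) + 2) < z.re ∧ z.re < 3 / 4}

lemma strip_open (N : ℕ) : IsOpen (strip N) :=
  (isOpen_lt continuous_const Complex.continuous_re).inter
    (isOpen_lt Complex.continuous_re continuous_const)

lemma Ek_bound {ω : ℕ} (hω : 1 ≤ ω) {δ : ℝ} (hδ : 0 < δ) (hδ1 : δ < 1 / 8) {S : ℝ}
    {c : ℕ → ℝ} {N : ℕ} {C : ℝ} (hb : ∀ u, 0 < u → u ≤ 1 → ‖fN S c N u‖ ≤ C * u ^ (2 * N))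
    (k : ℕ) {z : ℂ} (hz : z ∈ strip N) :
    ‖Ek ω δ S c N k z‖ ≤ 2 * C * ((k : ℝ) + 1) ^ (-2 : ℝ) := by
  have hC : 0 ≤ C := by
    have := (norm_nonneg _).trans (hb 1 one_pos le_rfl)
    simpa using this
  have ha := aa_pos hω δ k
  have hk := kpos k
  have hN : (0 : ℝ) ≤ N := Nat.cast_nonneg N
  unfold Ek
  rw [norm_mul]
  calc _ ≤ ‖wt ω k z‖ * (2 * C * aa ω δ k ^ (2 * N + 2 - 2 * z.re)) := by
        gcongr
        exact indBot_bound hb ha (aa_le_one hω (by linarith) k) hz.2.le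
    _ = 2 * C * ((‖wt ω k z‖ * aa ω δ k ^ (-2 * z.re)) * aa ω δ k ^ (2 * (N : ℝ) + 2)) := by
        rw [show 2 * (N : ℝ) + 2 - 2 * z.re = -2 * z.re + (2 * N + 2) by ring, Real.rpow_add ha]
        ring
    _ ≤ 2 * C * (((k : ℝ) + 1) ^ (-1 - 2 * δ * z.re) *
          (((k : ℝ) + 1) ^ (δ - 1)) ^ (2 * (N : ℝ) + 2)) := by
        have h1 := wt_aa hω δ k z
        have h2 := aa_le hω δ k
        gcongr
    _ = 2 * C * (((k : ℝ) + 1) ^ ((-1 - 2 * δ * z.re) + (δ - 1) * (2 * (N : ℝ) + 2))) := by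
        rw [Real.rpow_add hk, Real.rpow_mul hk.le]
    _ ≤ _ := by
        gcongr
        · simp
        · have h1 := hz.1
          have : -2 * δ * z.re ≤ 2 * δ * (N + 2) := by nlinarith
          nlinarith

lemma summable_two (C : ℝ) : Summable (fun k : ℕ => 2 * C * ((k : ℝ) + 1) ^ (-2 : ℝ)) :=
  (summable_kpow (by norm_num)).mul_left _

lemma fN_O {S : ℝ} {c : ℕ → ℝ} {N : ℕ} {C : ℝ}
    (hb : ∀ u, 0 < u → u ≤ 1 → ‖fN S c N u‖ ≤ C * u ^ (2 * N)) :
    fN S c N =O[nhdsWithin 0 (Set.Ioi 0)] (fun x : ℝ => x ^ (-(0 : ℝ))) := by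
  have hC : 0 ≤ C := by
    have := (norm_nonneg _).trans (hb 1 one_pos le_rfl)
    simpa using this
  apply Asymptotics.IsBigO.of_bound C
  have : ∀ᶠ u : ℝ in nhdsWithin 0 (Set.Ioi 0), u < 1 :=
    nhdsWithin_le_nhds (eventually_lt_nhds one_pos)
  filter_upwards [this, self_mem_nhdsWithin] with u hu hu0
  have hu0' : (0 : ℝ) < u := hu0
  refine (hb u hu0' hu.le).trans ?_
  simp only [neg_zero, Real.rpow_zero, norm_one]
  gcongr
  exact pow_le_one₀ hu0'.le hu.le

lemma EE_analytic {ω : ℕ} (hω : 1 ≤ ω) {δ : ℝ} (hδ : 0 < δ) (hδ1 : δ < 1 / 8) {S : ℝ}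
    {c : ℕ → ℝ} {N : ℕ} {C : ℝ} (hb : ∀ u, 0 < u → u ≤ 1 → ‖fN S c N u‖ ≤ C * u ^ (2 * N))
    {z : ℂ} (hz : z ∈ strip N) : AnalyticAt ℂ (EE ω δ S c N) z := by
  have : DifferentiableOn ℂ (fun z => ∑' k, Ek ω δ S c N k z) (strip N) := by
    apply Complex.differentiableOn_tsum_of_summable_norm (summable_two C) _ (strip_open N)
      (fun k w hw => Ek_bound hω hδ hδ1 hb k hw)
    intro k w hw
    unfold Ek
    apply DifferentiableAt.differentiableWithinAt
    refine (wt_diff hω k w).mul ?_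
    refine DifferentiableAt.comp w (g := mellin ((Set.Iic (aa ω δ k)).indicator (fN S c N)))
      (f := fun z : ℂ => 2 - 2 * z) (indBot_diff (fN_cont S c N) _ (fN_O hb) ?_) (by fun_prop)
    have := hw.2
    simp; linarith
  exact this.analyticAt ((strip_open N).mem_nhds hz)

lemma EE_norm {ω : ℕ} (hω : 1 ≤ ω) {δ : ℝ} (hδ : 0 < δ) (hδ1 : δ < 1 / 8) {S : ℝ}
    {c : ℕ → ℝ} {N : ℕ} {C : ℝ} (hb : ∀ u, 0 < u → u ≤ 1 → ‖fN S c N u‖ ≤ C * u ^ (2 * N))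
    {z : ℂ} (hz : z ∈ strip N) :
    ‖EE ω δ S c N z‖ ≤ ∑' k : ℕ, 2 * C * ((k : ℝ) + 1) ^ (-2 : ℝ) :=
  tsum_of_norm_bounded (summable_two C).hasSum (fun k => Ek_bound hω hδ hδ1 hb k hz)

noncomputable def Zm (ω : ℕ) (δ : ℝ) (m : ℕ) (z : ℂ) : ℂ :=
  ((ω : ℂ) ^ (2 * m + 3))⁻¹ * riemannZeta (1 + 2 * δ * z + (1 - δ) * (2 * m + 2)) / (2 * m + 2 - 2 * z)

noncomputable def GF (ω : ℕ) (δ S : ℝ) (c : ℕ → ℝ) (N : ℕ) (z : ℂ) : ℂ :=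
  (ω : ℂ) ^ (-(2 * z + 1)) * riemannZeta (2 * z + 1) * Mdef S z -
    ∑ m ∈ Finset.range N, (c m : ℂ) * Zm ω δ m z - EE ω δ S c N z

lemma GF_mero {ω : ℕ} (hω : 1 ≤ ω) {δ : ℝ} (hδ : 0 < δ) (hδ1 : δ < 1 / 8) {S : ℝ} (hS : 0 < S)
    {c : ℕ → ℝ} {N : ℕ} {C : ℝ} (hb : ∀ u, 0 < u → u ≤ 1 → ‖fN S c N u‖ ≤ C * u ^ (2 * N))
    {z : ℂ} (hz : z ∈ strip N) : MeromorphicAt (GF ω δ S c N) z := by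
  have hω0 : (ω : ℂ) ≠ 0 := by exact_mod_cast (by omega : ω ≠ 0)
  unfold GF
  refine MeromorphicAt.sub (MeromorphicAt.sub (MeromorphicAt.mul (MeromorphicAt.mul ?_ ?_) ?_) ?_) ?_
  · exact (analytic_cpow_const hω0 (by fun_prop)).meromorphicAt
  · exact (meromorphic_zeta _).comp_analyticAt (f := riemannZeta) (g := fun z => 2 * z + 1) (by fun_prop)
  · exact meromorphic_Mdef hS z
  · apply MeromorphicAt.fun_sum
    intro m _
    refine (MeromorphicAt.const _ _).mul ?_
    unfold Zm
    refine MeromorphicAt.div (MeromorphicAt.mul (MeromorphicAt.const _ _) ?_) (by fun_prop)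
    exact (meromorphic_zeta _).comp_analyticAt (f := riemannZeta)
      (g := fun z => 1 + 2 * δ * z + (1 - δ) * (2 * m + 2)) (by fun_prop)
  · exact (EE_analytic hω hδ hδ1 hb hz).meromorphicAt

lemma wt_eq {ω : ℕ} (k : ℕ) (z : ℂ) :
    wt ω k z = (ω : ℂ) ^ (-(2 * z + 1)) * (1 / ((k : ℂ) + 1) ^ (2 * z + 1)) := by
  unfold wt
  rw [Complex.ofReal_mul, Complex.mul_cpow_ofReal_nonneg (kpos k).le (Nat.cast_nonneg ω), mul_comm]
  push_cast
  rw [Complex.cpow_neg ((k : ℂ) + 1), one_div]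

lemma zeta_hasSum {s : ℂ} (hs : 1 < s.re) :
    HasSum (fun k : ℕ => 1 / ((k : ℂ) + 1) ^ s) (riemannZeta s) := by
  rw [zeta_eq_tsum_one_div_nat_add_one_cpow hs]
  apply Summable.hasSum
  have := (summable_nat_add_iff 1).2 (Complex.summable_one_div_nat_cpow.2 hs)
  simpa using this

lemma wt_hasSum {ω : ℕ} {z : ℂ} (hz : 0 < z.re) :
    HasSum (fun k => wt ω k z) ((ω : ℂ) ^ (-(2 * z + 1)) * riemannZeta (2 * z + 1)) := by
  simp_rw [wt_eq]
  apply HasSum.mul_left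
  apply zeta_hasSum
  simp; linarith

lemma rpow_cpow {x : ℝ} (hx : 0 < x) (d : ℝ) (w : ℂ) :
    ((x ^ d : ℝ) : ℂ) ^ w = (x : ℂ) ^ ((d : ℂ) * w) := by
  have h1 : ((x ^ d : ℝ) : ℂ) ≠ 0 := by exact_mod_cast (Real.rpow_pos_of_pos hx d).ne'
  have h2 : (x : ℂ) ≠ 0 := by exact_mod_cast hx.ne'
  rw [Complex.cpow_def_of_ne_zero h1, Complex.cpow_def_of_ne_zero h2,
    ← Complex.ofReal_log (Real.rpow_nonneg hx.le d), ← Complex.ofReal_log hx.le, Real.log_rpow hx]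
  congr 1; push_cast; ring

lemma wt_aa_eq {ω : ℕ} (hω : 1 ≤ ω) (δ : ℝ) (k m : ℕ) (z : ℂ) :
    wt ω k z * (aa ω δ k : ℂ) ^ (2 * m + 2 - 2 * z) =
      ((ω : ℂ) ^ (2 * m + 3))⁻¹ *
        (1 / ((k : ℂ) + 1) ^ (1 + 2 * δ * z + (1 - δ) * (2 * m + 2))) := by
  have hω0 : (ω : ℂ) ≠ 0 := by exact_mod_cast (by omega : ω ≠ 0)
  have hk0 : ((k : ℂ) + 1) ≠ 0 := by exact_mod_cast (kpos k).ne'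
  have hka : (((k : ℝ) + 1 : ℝ) : ℂ) = (k : ℂ) + 1 := by push_cast; rfl
  rw [wt_eq]
  have e : (aa ω δ k : ℂ) ^ (2 * m + 2 - 2 * z) =
      ((k : ℂ) + 1) ^ (((δ : ℂ) - 1) * (2 * m + 2 - 2 * z)) * (ω : ℂ) ^ (-(2 * m + 2 - 2 * z)) := by
    unfold aa
    rw [div_eq_mul_inv, Complex.ofReal_mul, Complex.mul_cpow_ofReal_nonneg
      (Real.rpow_nonneg (kpos k).le _) (inv_nonneg.2 (Nat.cast_nonneg ω))]
    congr 1
    · rw [rpow_cpow (kpos k), hka]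
      push_cast; rfl
    · rw [Complex.ofReal_inv, Complex.inv_cpow, Complex.cpow_neg]
      · simp
      · rw [Complex.arg_ofReal_of_nonneg (Nat.cast_nonneg ω)]; exact Real.pi_pos.ne
  rw [e, one_div, one_div, ← Complex.cpow_neg, ← Complex.cpow_neg]
  have e2 : ((ω : ℂ) ^ (2 * m + 3))⁻¹ = (ω : ℂ) ^ (-(2 * z + 1)) * (ω : ℂ) ^ (-(2 * m + 2 - 2 * z)) := by
    rw [← Complex.cpow_add _ _ hω0, ← Complex.cpow_natCast, ← Complex.cpow_neg]
    congr 1; push_cast; ring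
  have e3 : ((k : ℂ) + 1) ^ (-(1 + 2 * δ * z + (1 - δ) * (2 * m + 2))) =
      ((k : ℂ) + 1) ^ (-(2 * z + 1)) * ((k : ℂ) + 1) ^ (((δ : ℂ) - 1) * (2 * m + 2 - 2 * z)) := by
    rw [← Complex.cpow_add _ _ hk0]
    congr 1; ring
  rw [e2, e3]
  ring

lemma Zm_hasSum {ω : ℕ} (hω : 1 ≤ ω) {δ : ℝ} (hδ : 0 < δ) (hδ1 : δ < 1 / 8) (m : ℕ) {z : ℂ}
    (hz : 0 < z.re) :
    HasSum (fun k => wt ω k z * ((aa ω δ k : ℂ) ^ (2 * m + 2 - 2 * z) / (2 * m + 2 - 2 * z)))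
      (Zm ω δ m z) := by
  simp_rw [← mul_div_assoc, wt_aa_eq hω, Zm]
  apply HasSum.div_const
  apply HasSum.mul_left
  apply zeta_hasSum
  have hm : (0 : ℝ) ≤ m := Nat.cast_nonneg _
  have : (1 + 2 * (δ : ℂ) * z + (1 - δ) * (2 * m + 2)).re =
      1 + 2 * δ * z.re + (1 - δ) * (2 * m + 2) := by
    simp
  rw [this]
  have h1 : 0 < δ * z.re := mul_pos hδ hz
  have h2 : 0 ≤ (1 - δ) * (2 * m + 2) := mul_nonneg (by linarith) (by linarith)
  linarith

lemma Ik_decomp {ω : ℕ} (hω : 1 ≤ ω) {δ : ℝ} {S : ℝ} (hS : 0 < S)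
    {c : ℕ → ℝ} {N : ℕ} {C : ℝ} (hb : ∀ u, 0 < u → u ≤ 1 → ‖fN S c N u‖ ≤ C * u ^ (2 * N))
    {z : ℂ} (hz0 : 0 < z.re) (hz1 : z.re < 3 / 4) (k : ℕ) :
    Ik ω δ S k z = wt ω k z * Mdef S z - ∑ m ∈ Finset.range N, (c m : ℂ) *
      (wt ω k z * ((aa ω δ k : ℂ) ^ (2 * m + 2 - 2 * z) / (2 * m + 2 - 2 * z))) -
      Ek ω δ S c N k z := by
  have ha := aa_pos hω δ k
  set a := aa ω δ k with hadef
  have hr : 0 < (2 - 2 * z).re := by simp; linarith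
  have hM : MellinConvergent (hC S) (2 - 2 * z) := hC_mellin hS hr (by simp; linarith)
  have hE : MellinConvergent ((Set.Iic a).indicator (fN S c N)) (2 - 2 * z) :=
    indBot_conv (fN_cont S c N) a (fN_O hb) hr
  have hP : ∀ m : ℕ, _ := fun m => indBot_pow m ha (z := z) (by linarith)
  have key : mellin ((Set.Ioi a).indicator (hC S)) (2 - 2 * z) = mellin (hC S) (2 - 2 * z) -
      ∑ m ∈ Finset.range N, (c m : ℂ) *
        mellin ((Set.Iic a).indicator (fun u : ℝ => (u : ℂ) ^ (2 * m))) (2 - 2 * z) -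
      mellin ((Set.Iic a).indicator (fN S c N)) (2 - 2 * z) := by
    unfold mellin
    simp_rw [← integral_const_mul]
    rw [← integral_finsetSum, ← integral_sub, ← integral_sub]
    · congr 1
      ext u
      by_cases h : u ≤ a
      · rw [Set.indicator_of_notMem (by simpa using h), Set.indicator_of_mem (by exact h)]
        simp only [smul_eq_mul, fN]
        have : ∀ m, ((Set.Iic a).indicator (fun u : ℝ => (u : ℂ) ^ (2 * m))) u = (u : ℂ) ^ (2 * m) :=
          fun m => Set.indicator_of_mem (by exact h) _
        simp_rw [this]
        rw [mul_sub, Finset.mul_sum, mul_zero]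
        have : ∑ m ∈ Finset.range N, (c m : ℂ) * ((u : ℂ) ^ (2 - 2 * z - 1) * (u : ℂ) ^ (2 * m)) =
          ∑ m ∈ Finset.range N, (u : ℂ) ^ (2 - 2 * z - 1) * ((c m : ℂ) * (u : ℂ) ^ (2 * m)) :=
          Finset.sum_congr rfl (fun m _ => by ring)
        rw [this]; ring
      · rw [Set.indicator_of_mem (by simpa using h), Set.indicator_of_notMem (by simpa using h)]
        have : ∀ m, ((Set.Iic a).indicator (fun u : ℝ => (u : ℂ) ^ (2 * m))) u = 0 :=
          fun m => Set.indicator_of_notMem (by simpa using h) _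
        simp_rw [this]
        simp
    · exact hM.sub (integrable_finsetSum _ fun m _ => (hP m).1.const_mul _)
    · exact hE
    · exact hM
    · exact integrable_finsetSum _ fun m _ => (hP m).1.const_mul _
    · exact fun m _ => (hP m).1.const_mul _
  unfold Ik Ek
  rw [← hadef, key, mellin_hC hS (by linarith) (by linarith), mul_sub, mul_sub, Finset.mul_sum]
  congr 2
  apply Finset.sum_congr rfl
  intro m _
  rw [(hP m).2]
  ring

lemma GG_eq_GF {ω : ℕ} (hω : 1 ≤ ω) {δ : ℝ} (hδ : 0 < δ) (hδ1 : δ < 1 / 8) {S : ℝ} (hS : 0 < S)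
    {c : ℕ → ℝ} {N : ℕ} {C : ℝ} (hb : ∀ u, 0 < u → u ≤ 1 → ‖fN S c N u‖ ≤ C * u ^ (2 * N))
    {z : ℂ} (hz0 : 0 < z.re) (hz1 : z.re < 3 / 4) : GG ω δ S z = GF ω δ S c N z := by
  have hz : z ∈ strip N := ⟨by have : (0 : ℝ) ≤ N := Nat.cast_nonneg N
                               linarith, hz1⟩
  unfold GG
  simp_rw [Ik_decomp hω hS hb hz0 hz1]
  apply HasSum.tsum_eq
  unfold GF
  refine HasSum.sub (HasSum.sub ((wt_hasSum hz0).mul_right _) ?_) ?_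
  · exact hasSum_sum fun m _ => (Zm_hasSum hω hδ hδ1 m hz0).mul_left _
  · exact (Summable.of_norm_bounded (summable_two C)
      (fun k => Ek_bound hω hδ hδ1 hb k hz)).hasSum

open Topology

/-! ### Gluing meromorphic functions -/

def rhp (r : ℝ) : Set ℂ := {s : ℂ | r < s.re}

lemma rhp_open (r : ℝ) : IsOpen (rhp r) := isOpen_lt continuous_const Complex.continuous_re

lemma rhp_connected (r : ℝ) : IsConnected (rhp r) := by
  refine ⟨⟨((r + 1 : ℝ) : ℂ), ?_⟩, (convex_halfSpace_re_gt r).isPreconnected⟩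
  simp [rhp]

lemma glue_aux {f g : ℂ → ℂ} {r : ℝ} (hr : r ≤ 0) (hf : MeromorphicOn f (rhp r))
    (hg : MeromorphicOn g (rhp r)) (h : ∀ s : ℂ, 0 < s.re → f s = g s) {s : ℂ} (hs : r < s.re) :
    f =ᶠ[𝓝[≠] s] g := by
  have hd : MeromorphicOn (f - g) (rhp r) := hf.sub hg
  have h1 : meromorphicOrderAt (f - g) 1 = ⊤ := by
    rw [meromorphicOrderAt_eq_top_iff]
    apply nhdsWithin_le_nhds
    filter_upwards [(rhp_open 0).mem_nhds (show (1 : ℂ) ∈ rhp 0 by simp [rhp])] with w hw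
    simp [h w hw]
  have h2 : meromorphicOrderAt (f - g) s = ⊤ := by
    by_contra hne
    have := (hd.exists_meromorphicOrderAt_ne_top_iff_forall (rhp_connected r)).1
      ⟨⟨s, hs⟩, hne⟩ ⟨1, by simp [rhp]; linarith⟩
    exact this h1
  rw [meromorphicOrderAt_eq_top_iff] at h2
  filter_upwards [h2] with w hw
  simpa [sub_eq_zero] using hw

lemma glue (H : ℕ → ℂ → ℂ) (f : ℂ → ℂ) (hm : ∀ n : ℕ, MeromorphicOn (H n) (rhp (-((n : ℝ) + 2))))
    (he : ∀ (n : ℕ) (s : ℂ), 0 < s.re → H n s = f s) :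
    ∃ Ht : ℂ → ℂ, (∀ z, MeromorphicAt Ht z) ∧
      ∀ (n : ℕ) (s : ℂ), -((n : ℝ) + 2) < s.re → Ht =ᶠ[𝓝[≠] s] H n := by
  have step : ∀ (m n : ℕ) (s : ℂ), -((m : ℝ) + 2) < s.re → -((n : ℝ) + 2) < s.re →
      H m =ᶠ[𝓝[≠] s] H n := by
    intro m n s h1 h2
    have hmn : max (-((m : ℝ) + 2)) (-((n : ℝ) + 2)) ≤ 0 := by
      apply max_le <;> linarith [(Nat.cast_nonneg m : (0 : ℝ) ≤ m), (Nat.cast_nonneg n : (0 : ℝ) ≤ n)]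
    refine glue_aux hmn ((hm m).mono_set ?_) ((hm n).mono_set ?_)
      (fun w hw => (he m w hw).trans (he n w hw).symm) (max_lt h1 h2)
    · intro w hw
      have hw' : max (-((m : ℝ) + 2)) (-((n : ℝ) + 2)) < w.re := hw
      exact lt_of_le_of_lt (le_max_left _ _) hw'
    · intro w hw
      have hw' : max (-((m : ℝ) + 2)) (-((n : ℝ) + 2)) < w.re := hw
      exact lt_of_le_of_lt (le_max_right _ _) hw'
  have hloc : ∀ (n : ℕ) (s : ℂ), -((n : ℝ) + 2) < s.re →
      (fun w : ℂ => H ⌊-w.re⌋₊ w) =ᶠ[𝓝[≠] s] H n := by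
    intro n s hs
    have h1 : ∀ᶠ w in 𝓝[≠] s, ∀ m ∈ Finset.range (⌊-s.re⌋₊ + 3), -((m : ℝ) + 2) < s.re → H m w = H n w := by
      rw [Finset.eventually_all]
      intro m _
      by_cases hms : -((m : ℝ) + 2) < s.re
      · filter_upwards [step m n s hms hs] with w hw _ using hw
      · exact Eventually.of_forall fun w h => absurd h hms
    have h2 : ∀ᶠ w in 𝓝[≠] s, s.re - 1 < w.re ∧ w.re < s.re + 1 := by
      apply nhdsWithin_le_nhds
      exact (Complex.continuous_re.continuousAt.eventually_const_lt (by linarith)).and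
        (Complex.continuous_re.continuousAt.eventually_lt_const (by linarith))
    filter_upwards [h1, h2] with w hw1 hw2
    apply hw1
    · rw [Finset.mem_range]
      have : ⌊-w.re⌋₊ ≤ ⌊-s.re + 1⌋₊ := Nat.floor_mono (by linarith [hw2.1])
      have h3 : ⌊-s.re + 1⌋₊ ≤ ⌊-s.re⌋₊ + 1 := by
        have := Nat.floor_lt' (a := -s.re + 1) (n := ⌊-s.re⌋₊ + 2) (by omega)
        have h4 : -s.re + 1 < ((⌊-s.re⌋₊ + 2 : ℕ) : ℝ) := by
          push_cast
          linarith [Nat.lt_floor_add_one (-s.re)]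
        have := this.2 h4
        omega
      omega
    · have := Nat.lt_floor_add_one (-w.re)
      linarith [hw2.2]
  refine ⟨fun w => H ⌊-w.re⌋₊ w, fun z => ?_, hloc⟩
  have hz : -((⌊-z.re⌋₊ : ℝ) + 2) < z.re := by linarith [Nat.lt_floor_add_one (-z.re)]
  exact (hm _ z hz).congr (hloc _ z hz).symm

lemma normalForm {F0 : ℂ → ℂ} (h : ∀ z, MeromorphicAt F0 z) :
    ∃ F : ℂ → ℂ, MeromorphicOn F Set.univ ∧
      ∀ (s : ℂ) (φ : ℂ → ℂ), AnalyticAt ℂ φ s → F0 =ᶠ[𝓝[≠] s] φ → F =ᶠ[𝓝 s] φ := by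
  have hm : MeromorphicOn F0 Set.univ := fun z _ => h z
  have hn : MeromorphicNFOn (toMeromorphicNFOn F0 Set.univ) Set.univ :=
    meromorphicNFOn_toMeromorphicNFOn _ _
  refine ⟨toMeromorphicNFOn F0 Set.univ, hn.meromorphicOn, fun s φ hφ he => ?_⟩
  rw [← (hn (Set.mem_univ s)).eventuallyEq_nhdsNE_iff_eventuallyEq_nhds hφ.meromorphicNFAt]
  exact (hm.toMeromorphicNFOn_eq_self_on_nhdsNE (Set.mem_univ s)).trans he

/-! ### The continued function -/

noncomputable def GT (ω : ℕ) (δ S : ℝ) (c : ℕ → ℝ) (N : ℕ) (z : ℂ) : ℂ :=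
  if 1 / 2 < z.re then GG ω δ S z else GF ω δ S c N z

lemma GT_eq {ω : ℕ} (hω : 1 ≤ ω) {δ : ℝ} (hδ : 0 < δ) (hδ1 : δ < 1 / 8) {S : ℝ} (hS : 0 < S)
    {c : ℕ → ℝ} {N : ℕ} {C : ℝ} (hb : ∀ u, 0 < u → u ≤ 1 → ‖fN S c N u‖ ≤ C * u ^ (2 * N))
    {z : ℂ} (hz0 : 0 < z.re) : GT ω δ S c N z = GG ω δ S z := by
  unfold GT
  split_ifs with h
  · rfl
  · exact (GG_eq_GF hω hδ hδ1 hS hb hz0 (by linarith)).symm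

lemma GT_mero {ω : ℕ} (hω : 1 ≤ ω) {δ : ℝ} (hδ : 0 < δ) (hδ1 : δ < 1 / 8) {S : ℝ} (hS : 0 < S)
    {c : ℕ → ℝ} {N : ℕ} {C : ℝ} (hb : ∀ u, 0 < u → u ≤ 1 → ‖fN S c N u‖ ≤ C * u ^ (2 * N))
    {z : ℂ} (hz : -((N : ℝ) + 2) < z.re) : MeromorphicAt (GT ω δ S c N) z := by
  by_cases h : 0 < z.re
  · refine (GG_diff hω hδ hS h).meromorphicAt.congr ?_
    apply nhdsWithin_le_nhds
    filter_upwards [(rhp_open 0).mem_nhds h] with w hw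
    exact (GT_eq hω hδ hδ1 hS hb hw).symm
  · refine (GF_mero hω hδ hδ1 hS hb (z := z) ⟨hz, by linarith⟩).congr ?_
    apply nhdsWithin_le_nhds
    filter_upwards [(isOpen_lt Complex.continuous_re continuous_const).mem_nhds
      (show z.re < 1 / 2 by linarith)] with w hw
    have hw' : w.re < 1 / 2 := hw
    simp only [GT, if_neg (not_lt.2 hw'.le)]

noncomputable def HH (ω : ℕ) (δ S : ℝ) (c : ℕ → ℝ) (N : ℕ) (s : ℂ) : ℂ :=
  ∑ j ∈ Finset.range (N + 2), wj s j * GT ω δ S c N (s + j) + VV ω δ S (N + 2) s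

lemma HH_mero {ω : ℕ} (hω : 1 ≤ ω) {δ : ℝ} (hδ : 0 < δ) (hδ1 : δ < 1 / 8) {S : ℝ} (hS : 0 < S)
    {c : ℕ → ℝ} {N : ℕ} {C : ℝ} (hb : ∀ u, 0 < u → u ≤ 1 → ‖fN S c N u‖ ≤ C * u ^ (2 * N)) :
    MeromorphicOn (HH ω δ S c N) (rhp (-((N : ℝ) + 2))) := by
  intro s hs
  have hs' : -((N : ℝ) + 2) < s.re := hs
  unfold HH
  refine MeromorphicAt.add (MeromorphicAt.fun_sum fun j _ => MeromorphicAt.mul ?_ ?_) ?_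
  · exact ((wj_diff j).analyticAt s).meromorphicAt
  · refine (GT_mero hω hδ hδ1 hS hb (z := s + j) ?_).comp_analyticAt (f := GT ω δ S c N)
      (g := fun s => s + j) (by fun_prop)
    have : (0 : ℝ) ≤ j := Nat.cast_nonneg _
    simp; linarith
  · refine (VV_analytic hω hδ hS (N + 2) ?_).meromorphicAt
    push_cast; linarith

lemma HH_eq {ω : ℕ} (hω : 1 ≤ ω) {δ : ℝ} (hδ : 0 < δ) (hδ1 : δ < 1 / 8) {S : ℝ} (hS : 0 < S)
    {c : ℕ → ℝ} {N : ℕ} {C : ℝ} (hb : ∀ u, 0 < u → u ≤ 1 → ‖fN S c N u‖ ≤ C * u ^ (2 * N))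
    {s : ℂ} (hs : 0 < s.re) : HH ω δ S c N s = VV ω δ S 0 s := by
  rw [VV_split hω hδ hS (N + 2) hs]
  unfold HH
  congr 1
  apply Finset.sum_congr rfl
  intro j _
  rw [GT_eq hω hδ hδ1 hS hb]
  have : (0 : ℝ) ≤ j := Nat.cast_nonneg _
  simp; linarith

/-! ### Behaviour at zero -/

noncomputable def qq (s : ℂ) : ℂ := (Complex.Gamma (1 + s))⁻¹ * (Complex.Gamma (1 - s))⁻¹

lemma qq_sin {s : ℂ} (hs : s ≠ 0) :
    2 * Complex.sin ((Real.pi : ℂ) * s) / (Real.pi : ℂ) = 2 * s * qq s := by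
  have h := Complex.Gamma_mul_Gamma_one_sub s
  have h2 := Complex.Gamma_add_one s hs
  have hpi : (Real.pi : ℂ) ≠ 0 := by exact_mod_cast Real.pi_pos.ne'
  unfold qq
  rw [add_comm 1 s, h2]
  have : 2 * s * ((s * Complex.Gamma s)⁻¹ * (Complex.Gamma (1 - s))⁻¹) =
      2 * (Complex.Gamma s * Complex.Gamma (1 - s))⁻¹ := by
    rw [mul_inv, mul_inv]
    field_simp
  rw [this, h, inv_div]
  ring

lemma qq_analytic : AnalyticAt ℂ qq 0 := by
  have h1 : Differentiable ℂ (fun s : ℂ => (Complex.Gamma (1 + s))⁻¹) :=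
    Complex.differentiable_one_div_Gamma.comp (by fun_prop : Differentiable ℂ (fun s : ℂ => 1 + s))
  have h2 : Differentiable ℂ (fun s : ℂ => (Complex.Gamma (1 - s))⁻¹) :=
    Complex.differentiable_one_div_Gamma.comp (by fun_prop : Differentiable ℂ (fun s : ℂ => 1 - s))
  exact (h1.mul h2).analyticAt 0

lemma qq_zero : qq 0 = 1 := by simp [qq]

lemma qq_deriv : HasDerivAt qq 0 0 := by
  have h2 : HasDerivAt (fun z : ℂ => Complex.Gamma (1 - z)) (-(-(Real.eulerMascheroniConstant : ℂ))) 0 := by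
    apply HasDerivAt.comp_const_sub
    simpa using Complex.hasDerivAt_Gamma_one
  have h3 : HasDerivAt (fun z : ℂ => Complex.Gamma (1 + z)) (-(Real.eulerMascheroniConstant : ℂ)) 0 := by
    apply HasDerivAt.comp_const_add
    simpa using Complex.hasDerivAt_Gamma_one
  have h4 := (h3.inv (by simp)).mul (h2.inv (by simp))
  refine h4.congr_deriv ?_
  simp

lemma analytic_Gamma {s : ℂ} (h : Complex.Gamma s ≠ 0) : AnalyticAt ℂ Complex.Gamma s := by
  have h1 : AnalyticAt ℂ (fun s => (Complex.Gamma s)⁻¹) s :=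
    Complex.differentiable_one_div_Gamma.analyticAt s
  have h2 := h1.inv (inv_ne_zero h)
  have e : (fun s => (Complex.Gamma s)⁻¹)⁻¹ = Complex.Gamma := by ext s; simp
  rwa [e] at h2

lemma Mdef_analytic {S : ℝ} (hS : 0 < S) : AnalyticAt ℂ (Mdef S) 0 := by
  unfold Mdef
  have hp : (Real.sqrt Real.pi : ℂ) ≠ 0 := by exact_mod_cast (Real.sqrt_pos.2 Real.pi_pos).ne'
  have h1 : AnalyticAt ℂ (fun z : ℂ => Complex.Gamma (1 - z)) 0 :=
    AnalyticAt.fun_comp (g := Complex.Gamma) (f := fun z : ℂ => 1 - z)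
      (analytic_Gamma (by simp)) (by fun_prop)
  have h2 : AnalyticAt ℂ (fun z : ℂ => Complex.Gamma (3 / 2 + z)) 0 :=
    AnalyticAt.fun_comp (g := Complex.Gamma) (f := fun z : ℂ => 3 / 2 + z)
      (analytic_Gamma (by rw [add_zero, Gamma_three_half]; simpa using hp)) (by fun_prop)
  refine AnalyticAt.mul (analytic_cpow_const (by exact_mod_cast hS.ne') (by fun_prop)) ?_
  exact analyticAt_const.mul ((h1.mul h2).div analyticAt_const
    (by rw [Gamma_five_half]; simpa using hp))

noncomputable def WW (ω : ℕ) (δ S : ℝ) (s : ℂ) : ℂ :=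
  wj s 1 * GG ω δ S (s + 1) + VV ω δ S 2 s

lemma wj_zero (j : ℕ) : wj 0 (j + 1) = 0 := by
  unfold wj pochSym
  rw [Finset.prod_range_succ']
  simp

lemma WW_zero (ω : ℕ) (δ S : ℝ) : WW ω δ S 0 = 0 := by
  unfold WW VV TT
  rw [wj_zero 0]
  simp [wj_zero]

lemma WW_analytic {ω : ℕ} (hω : 1 ≤ ω) {δ : ℝ} (hδ : 0 < δ) {S : ℝ} (hS : 0 < S) :
    AnalyticAt ℂ (WW ω δ S) 0 := by
  unfold WW
  refine AnalyticAt.add (((wj_diff 1).analyticAt 0).mul ?_) (VV_analytic hω hδ hS 2 (by simp))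
  exact AnalyticAt.fun_comp (g := GG ω δ S) (f := fun s : ℂ => s + 1)
    (GG_diff hω hδ hS (by simp)) (by fun_prop)

noncomputable def phi (ω : ℕ) (δ S c : ℝ) (s : ℂ) : ℂ :=
  qq s * (2 * c * ((ω : ℂ) ^ (-(2 * s + 1)) * Mdef S s * (1 / 2 + s * riemannZeta₀ (2 * s + 1)) +
    s * (WW ω δ S s - EE ω δ S 0 0 s)))

lemma hb0 (S : ℝ) : ∀ u, 0 < u → u ≤ 1 → ‖fN S 0 0 u‖ ≤ 1 * u ^ (2 * 0) := by
  intro u _ _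
  simpa [fN, norm_hC] using hh_le_one S u

lemma zero_mem_strip : (0 : ℂ) ∈ strip 0 := by
  constructor <;> norm_num

lemma phi_analytic {ω : ℕ} (hω : 1 ≤ ω) {δ : ℝ} (hδ : 0 < δ) (hδ1 : δ < 1 / 8) {S : ℝ} (hS : 0 < S)
    (c : ℝ) : AnalyticAt ℂ (phi ω δ S c) 0 := by
  have hω0 : (ω : ℂ) ≠ 0 := by exact_mod_cast (by omega : ω ≠ 0)
  have h0 : AnalyticAt ℂ (fun s : ℂ => riemannZeta₀ (2 * s + 1)) 0 :=
    (differentiable_riemannZeta₀.comp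
      (by fun_prop : Differentiable ℂ (fun s : ℂ => 2 * s + 1))).analyticAt 0
  have h1 : AnalyticAt ℂ (fun s : ℂ => (ω : ℂ) ^ (-(2 * s + 1))) 0 :=
    analytic_cpow_const hω0 (by fun_prop)
  have h2 := Mdef_analytic hS
  have h3 := WW_analytic hω hδ hS
  have h4 := EE_analytic hω hδ hδ1 (hb0 S) zero_mem_strip
  unfold phi
  exact qq_analytic.mul (analyticAt_const.mul (((h1.mul h2).mul
    (analyticAt_const.add (analyticAt_id.mul h0))).add (analyticAt_id.mul (h3.sub h4))))

lemma phi_zero {ω : ℕ} {δ : ℝ} {S : ℝ} (hS : 0 < S) (c : ℝ) :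
    phi ω δ S c 0 = c * ((ω : ℂ)⁻¹ * (1 / (3 * (S : ℂ) ^ 2))) := by
  unfold phi
  rw [qq_zero, Mdef_zero hS]
  simp only [mul_zero, zero_add, zero_mul, add_zero, Complex.cpow_neg_one]
  ring

lemma phi_deriv {ω : ℕ} (hω : 1 ≤ ω) {δ : ℝ} (hδ : 0 < δ) (hδ1 : δ < 1 / 8) {S : ℝ} (hS : 0 < S)
    (c : ℝ) : HasDerivAt (phi ω δ S c)
      (c * ((ω : ℂ)⁻¹ * (1 / (3 * (S : ℂ) ^ 2))) * (2 * Real.log S + 2 - 2 * Real.log 2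
        - 2 * Real.log ω + 2 * Real.eulerMascheroniConstant) - 2 * c * EE ω δ S 0 0 0) 0 := by
  have hω0 : (ω : ℂ) ≠ 0 := by exact_mod_cast (by omega : ω ≠ 0)
  have h0 : DifferentiableAt ℂ (fun s : ℂ => riemannZeta₀ (2 * s + 1)) 0 :=
    (differentiable_riemannZeta₀.comp
      (by fun_prop : Differentiable ℂ (fun s : ℂ => 2 * s + 1))) 0
  have h1 : HasDerivAt (fun z : ℂ => (ω : ℂ) ^ (-(2 * z + 1)))
      ((ω : ℂ) ^ (-(2 * (0 : ℂ) + 1)) * Complex.log ω * (-(2 * 1))) 0 := by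
    apply HasDerivAt.const_cpow
    · exact (((hasDerivAt_id _).const_mul 2).add_const 1).neg
    · left; exact hω0
  have h2 := hasDerivAt_Mdef_zero hS
  have h3 := (WW_analytic hω hδ hS).differentiableAt.hasDerivAt
  have h4 := (EE_analytic hω hδ hδ1 (hb0 S) zero_mem_strip).differentiableAt.hasDerivAt
  have h5 := qq_deriv.mul (((((h1.mul h2).mul
    (((hasDerivAt_id (0 : ℂ)).mul h0.hasDerivAt).const_add (1 / 2))).add
      ((hasDerivAt_id (0 : ℂ)).mul (h3.sub h4)))).const_mul (2 * (c : ℂ)))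
  refine h5.congr_deriv ?_
  have hl : Complex.log (ω : ℂ) = (Real.log ω : ℂ) := by
    rw [Complex.ofReal_log (Nat.cast_nonneg ω)]; simp
  simp only [Pi.mul_apply, Pi.add_apply, Pi.sub_apply, id, qq_zero, Mdef_zero hS, WW_zero, hl,
    mul_zero, zero_add, zero_mul, add_zero, Complex.cpow_neg_one, riemannZeta₀_one]
  ring

lemma HH_phi {ω : ℕ} (hω : 1 ≤ ω) {δ : ℝ} (hδ : 0 < δ) {S : ℝ} (c : ℝ) :
    (fun s => (2 * Complex.sin ((Real.pi : ℂ) * s) / (Real.pi : ℂ)) * ((c : ℂ) * HH ω δ S 0 0 s))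
      =ᶠ[𝓝[≠] 0] phi ω δ S c := by
  have h1 : ∀ᶠ s : ℂ in 𝓝[≠] 0, s ≠ 0 := self_mem_nhdsWithin
  have h2 : ∀ᶠ s : ℂ in 𝓝[≠] 0, -(1 / 2) < s.re ∧ s.re < 1 / 2 := by
    apply nhdsWithin_le_nhds
    exact (Complex.continuous_re.continuousAt.eventually_const_lt (by norm_num)).and
      (Complex.continuous_re.continuousAt.eventually_lt_const (by norm_num))
  filter_upwards [h1, h2] with s hs hs2
  rw [qq_sin hs]
  unfold HH phi WW
  rw [Finset.sum_range_succ, Finset.sum_range_succ, Finset.sum_range_zero]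
  have e0 : GT ω δ S 0 0 (s + (0 : ℕ)) = GF ω δ S 0 0 s := by
    unfold GT
    simp only [Nat.cast_zero, add_zero]
    rw [if_neg (not_lt.2 hs2.2.le)]
  have e1 : GT ω δ S 0 0 (s + (1 : ℕ)) = GG ω δ S (s + 1) := by
    unfold GT
    simp only [Nat.cast_one]
    rw [if_pos (by simp; linarith [hs2.1])]
  have e2 : wj s 0 = 1 := by simp [wj, pochSym]
  rw [e0, e1, e2]
  unfold GF
  rw [riemannZeta_eq_inv_sub_add (show 2 * s + 1 ≠ 1 by simpa using hs)]
  simp only [Finset.range_zero, Finset.sum_empty, sub_zero, zero_add, one_mul, add_sub_cancel_right]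
  have e3 : s * (2 * s)⁻¹ = 1 / 2 := by field_simp
  linear_combination (2 * qq s * c * (ω : ℂ) ^ (-(2 * s + 1)) * Mdef S s) * e3


noncomputable def pre (s : ℂ) : ℂ := 2 * Complex.sin ((Real.pi : ℂ) * s) / (Real.pi : ℂ)

lemma pre_diff : Differentiable ℂ pre := by
  unfold pre
  fun_prop

lemma Omega1Term_TT {ω : ℕ} (hω : 1 ≤ ω) (η δ : ℝ) (p : ℕ × ℕ) (s : ℂ) :
    Omega1Term ω η δ (p.1 + 1) p.2 s = pre s * (cc η : ℂ) * TT ω δ (Real.sinh η) 0 p s := by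
  rw [Omega1Term_eq hω]
  unfold TT pre
  simp only [Nat.add_zero]
  ring

lemma Omega1_tsum {ω : ℕ} (hω : 1 ≤ ω) (η δ : ℝ) (s : ℂ) :
    ∑' p : ℕ × ℕ, Omega1Term ω η δ (p.1 + 1) p.2 s =
      pre s * (cc η : ℂ) * VV ω δ (Real.sinh η) 0 s := by
  unfold VV
  rw [← tsum_mul_left]
  exact tsum_congr fun p => Omega1Term_TT hω η δ p s

lemma Omega1_summable {ω : ℕ} (hω : 1 ≤ ω) {δ : ℝ} (hδ : 0 < δ) {η : ℝ} (hη : 0 < η) {s : ℂ}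
    (hs : 0 < s.re) : Summable (fun p : ℕ × ℕ => ‖Omega1Term ω η δ (p.1 + 1) p.2 s‖) := by
  have h := (TT_summable hω hδ (Real.sinh_pos_iff.2 hη) 0 (s := s) (by simpa using hs)).mul_left
    ‖pre s * (cc η : ℂ)‖
  refine h.congr fun p => ?_
  rw [Omega1Term_TT hω, norm_mul _ (TT ω δ (Real.sinh η) 0 p s)]

lemma Omega1_unif {ω : ℕ} (hω : 1 ≤ ω) {δ : ℝ} (hδ : 0 < δ) {η : ℝ} (hη : 0 < η) :
    TendstoLocallyUniformlyOn
      (fun (N : Finset (ℕ × ℕ)) (s : ℂ) => ∑ p ∈ N, Omega1Term ω η δ (p.1 + 1) p.2 s)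
      (fun s : ℂ => ∑' p : ℕ × ℕ, Omega1Term ω η δ (p.1 + 1) p.2 s)
      atTop {s : ℂ | 1 < s.re ∧ s.re < 2} := by
  apply tendstoLocallyUniformlyOn_of_forall_exists_nhds
  intro s hs
  have hs1 : 1 < s.re := hs.1
  let V : Set ℂ := UU 0 (‖s‖ + 1) 1 ∩ {w | ‖pre w * (cc η : ℂ)‖ < ‖pre s * (cc η : ℂ)‖ + 1}
  have hV : V ∈ 𝓝 s := by
    refine Filter.inter_mem ((UU_open _ _ _).mem_nhds ⟨by linarith, by simpa using hs1⟩) ?_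
    have hc : Continuous (fun w => ‖pre w * (cc η : ℂ)‖) :=
      (pre_diff.continuous.mul continuous_const).norm
    exact (isOpen_lt hc continuous_const).mem_nhds (by simp)
  refine ⟨V, mem_nhdsWithin_of_mem_nhds hV, ?_⟩
  have hB : 0 < ‖s‖ + 1 := by positivity
  refine tendstoUniformlyOn_tsum
    ((TTb_summable hδ (Real.sinh η) 0 hB one_pos).mul_left (‖pre s * (cc η : ℂ)‖ + 1)) ?_
  intro p w hw
  obtain ⟨⟨h1, h2⟩, h3⟩ := hw
  have h3' : ‖pre w * (cc η : ℂ)‖ < ‖pre s * (cc η : ℂ)‖ + 1 := h3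
  rw [Omega1Term_TT hω, norm_mul _ (TT ω δ (Real.sinh η) 0 p w)]
  exact mul_le_mul h3'.le (TT_bound hω hδ (Real.sinh_pos_iff.2 hη) 0 one_pos h1.le h2.le p)
    (norm_nonneg _) (by positivity)

lemma exists_F {ω : ℕ} (hω : 1 ≤ ω) {δ : ℝ} (hδ : 0 < δ) (hδ1 : δ < 1 / 8) {η : ℝ} (hη : 0 < η) :
    ∃ F : ℂ → ℂ, MeromorphicOn F Set.univ ∧
      Set.EqOn F (fun s : ℂ => ∑' p : ℕ × ℕ, Omega1Term ω η δ (p.1 + 1) p.2 s)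
          {s : ℂ | 1 < s.re ∧ s.re < 2} ∧
      F =ᶠ[𝓝 0] phi ω δ (Real.sinh η) (cc η) := by
  set S := Real.sinh η with hSdef
  have hS : 0 < S := Real.sinh_pos_iff.2 hη
  have hex : ∀ n : ℕ, ∃ (c : ℕ → ℝ) (C : ℝ),
      (∀ u, 0 < u → u ≤ 1 → ‖fN S c n u‖ ≤ C * u ^ (2 * n)) ∧ (n = 0 → c = 0) := by
    intro n
    rcases Nat.eq_zero_or_pos n with h | h
    · subst h
      exact ⟨0, 1, hb0 S, fun _ => rfl⟩
    · obtain ⟨c, C, hc⟩ := exists_taylor S n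
      exact ⟨c, C, hc, fun h0 => absurd h0 h.ne'⟩
  choose c C hb hc0 using hex
  obtain ⟨Ht, hm, he⟩ := glue (fun n => HH ω δ S (c n) n) (VV ω δ S 0)
    (fun n => HH_mero hω hδ hδ1 hS (hb n)) (fun n s hs => HH_eq hω hδ hδ1 hS (hb n) hs)
  have hm0 : ∀ z, MeromorphicAt (fun s => pre s * ((cc η : ℂ) * Ht s)) z := fun z =>
    (pre_diff.analyticAt z).meromorphicAt.fun_mul ((MeromorphicAt.const _ _).fun_mul (hm z))
  obtain ⟨F, hF, hF2⟩ := normalForm hm0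
  refine ⟨F, hF, ?_, ?_⟩
  · intro s hs
    have hs0 : 0 < s.re := by linarith [hs.1]
    have hφ : AnalyticAt ℂ (fun w => pre w * ((cc η : ℂ) * VV ω δ S 0 w)) s :=
      (pre_diff.analyticAt s).fun_mul
        (analyticAt_const.fun_mul (VV_analytic hω hδ hS 0 (by simpa using hs0)))
    have h := hF2 s _ hφ ?_
    · rw [h.eq_of_nhds]
      simp only [Omega1_tsum hω]
      ring
    · filter_upwards [he 0 s (by simp; linarith),
        nhdsWithin_le_nhds ((rhp_open 0).mem_nhds hs0)] with w hw hw2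
      rw [hw, HH_eq hω hδ hδ1 hS (hb 0) hw2]
  · refine hF2 0 _ (phi_analytic hω hδ hδ1 hS _) ?_
    have h1 := he 0 0 (by simp)
    rw [hc0 0 rfl] at h1
    refine EventuallyEq.trans ?_ (HH_phi hω hδ (cc η))
    filter_upwards [h1] with w hw
    rw [hw]
    rfl

/-! ### Limits -/

noncomputable def kap (η : ℝ) : ℝ := (5 - Real.cosh η ^ 2) * Real.cosh η / 8

lemma cc_kap (η : ℝ) : cc η = kap η * Real.sinh η ^ 2 := by
  unfold cc kap; ring

lemma kap_zero : kap 0 = 1 / 2 := by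
  unfold kap; norm_num

lemma kap_diff : Differentiable ℝ kap := by
  unfold kap; fun_prop

lemma kap_lim : Tendsto kap (𝓝[>] 0) (𝓝 (1 / 2)) := by
  have := kap_diff.continuous.tendsto 0
  rw [kap_zero] at this
  exact this.mono_left nhdsWithin_le_nhds

lemma kap_log : Tendsto (fun η => (2 * kap η - 1) * Real.log η) (𝓝[>] 0) (𝓝 0) := by
  have h1 := (kap_diff 0).hasDerivAt.tendsto_slope
  have h2 : Tendsto (slope kap 0) (𝓝[>] 0) (𝓝 (deriv kap 0)) :=
    h1.mono_left (nhdsWithin_mono _ fun x hx => (ne_of_gt hx))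
  have h0 : Tendsto (fun x : ℝ => Real.log x * x) (𝓝[>] 0) (𝓝 0) := by
    simpa only [Real.rpow_one] using tendsto_log_mul_rpow_nhdsGT_zero zero_lt_one
  have h3 := (h2.const_mul 2).mul h0
  rw [mul_zero] at h3
  refine h3.congr' ?_
  filter_upwards [self_mem_nhdsWithin] with x hx
  have hx' : x ≠ 0 := ne_of_gt hx
  rw [slope_def_field, kap_zero]
  field_simp
  ring

lemma sinh_log : Tendsto (fun η => Real.log (Real.sinh η) - Real.log η) (𝓝[>] 0) (𝓝 0) := by
  have h1 := (Real.hasDerivAt_sinh 0).tendsto_slope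
  have h2 : Tendsto (slope Real.sinh 0) (𝓝[>] 0) (𝓝 1) := by
    rw [Real.cosh_zero] at h1
    exact h1.mono_left (nhdsWithin_mono _ fun x hx => (ne_of_gt hx))
  have h3 := h2.log one_ne_zero
  rw [Real.log_one] at h3
  refine h3.congr' ?_
  filter_upwards [self_mem_nhdsWithin] with x hx
  have hx' : 0 < x := hx
  rw [slope_def_field, Real.sinh_zero, sub_zero, sub_zero,
    Real.log_div (Real.sinh_pos_iff.2 hx').ne' hx'.ne']

lemma cc_EE {ω : ℕ} (hω : 1 ≤ ω) {δ : ℝ} (hδ : 0 < δ) (hδ1 : δ < 1 / 8) :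
    Tendsto (fun η : ℝ => 2 * (cc η : ℂ) * EE ω δ (Real.sinh η) 0 0 0) (𝓝[>] 0) (𝓝 0) := by
  have h1 : Tendsto (fun η : ℝ => 2 * |cc η| * ∑' k : ℕ, 2 * (1 : ℝ) * ((k : ℝ) + 1) ^ (-2 : ℝ))
      (𝓝[>] 0) (𝓝 0) := by
    have hc : Continuous cc := by unfold cc; fun_prop
    have hcont : Continuous (fun η : ℝ =>
      2 * |cc η| * ∑' k : ℕ, 2 * (1 : ℝ) * ((k : ℝ) + 1) ^ (-2 : ℝ)) :=
      (continuous_const.mul hc.abs).mul continuous_const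
    have := hcont.tendsto 0
    simp only [cc, Real.sinh_zero] at this
    simp only [ne_eq, OfNat.ofNat_ne_zero, not_false_eq_true, zero_pow, mul_zero, zero_div,
      abs_zero, zero_mul] at this
    exact this.mono_left nhdsWithin_le_nhds
  refine squeeze_zero_norm (fun η => ?_) h1
  rw [norm_mul, norm_mul, Complex.norm_real, Real.norm_eq_abs]
  have := EE_norm hω hδ hδ1 (hb0 (Real.sinh η)) zero_mem_strip
  have h2 : ‖(2 : ℂ)‖ = 2 := by simp
  rw [h2]
  gcongr

theorem statement12 (ω : ℕ) (hω : 1 ≤ ω) (δ : ℝ) (hδ0 : 0 < δ) (hδ1 : δ < 1 / 8) :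
    ∃ F : ℝ → ℂ → ℂ,
      (∀ η : ℝ, 0 < η →
        (∀ s ∈ {s : ℂ | 1 < s.re ∧ s.re < 2},
          Summable (fun p : ℕ × ℕ => ‖Omega1Term ω η δ (p.1 + 1) p.2 s‖)) ∧
        TendstoLocallyUniformlyOn
          (fun (N : Finset (ℕ × ℕ)) (s : ℂ) => ∑ p ∈ N, Omega1Term ω η δ (p.1 + 1) p.2 s)
          (fun s : ℂ => ∑' p : ℕ × ℕ, Omega1Term ω η δ (p.1 + 1) p.2 s)
          atTop {s : ℂ | 1 < s.re ∧ s.re < 2} ∧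
        MeromorphicOn (F η) Set.univ ∧
        Set.EqOn (F η) (fun s : ℂ => ∑' p : ℕ × ℕ, Omega1Term ω η δ (p.1 + 1) p.2 s)
          {s : ℂ | 1 < s.re ∧ s.re < 2} ∧
        AnalyticAt ℂ (F η) 0) ∧
      Tendsto (fun η : ℝ => F η 0) (nhdsWithin 0 (Set.Ioi 0))
        (nhds (1 / (6 * (ω : ℂ)))) ∧
      Tendsto
        (fun η : ℝ => deriv (F η) 0 -
          ((Real.eulerMascheroniConstant : ℂ) / (3 * (ω : ℂ)) + 1 / (3 * (ω : ℂ)) -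
            (Real.log 2 : ℂ) / (3 * (ω : ℂ)) - (Real.log ω : ℂ) / (3 * (ω : ℂ)) +
            (Real.log η : ℂ) / (3 * (ω : ℂ))))
        (nhdsWithin 0 (Set.Ioi 0)) (nhds 0) := by
  have hF : ∀ η : ℝ, ∃ F : ℂ → ℂ, 0 < η → (MeromorphicOn F Set.univ ∧
      Set.EqOn F (fun s : ℂ => ∑' p : ℕ × ℕ, Omega1Term ω η δ (p.1 + 1) p.2 s)
          {s : ℂ | 1 < s.re ∧ s.re < 2} ∧
      F =ᶠ[𝓝 0] phi ω δ (Real.sinh η) (cc η)) := by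
    intro η
    by_cases h : 0 < η
    · obtain ⟨F, hF⟩ := exists_F hω hδ0 hδ1 h
      exact ⟨F, fun _ => hF⟩
    · exact ⟨0, fun h' => absurd h' h⟩
  choose F hF using hF
  have hω0 : (ω : ℂ) ≠ 0 := by exact_mod_cast (by omega : ω ≠ 0)
  refine ⟨F, fun η hη => ⟨fun s hs => Omega1_summable hω hδ0 hη (by linarith [hs.1]),
    Omega1_unif hω hδ0 hη, (hF η hη).1, (hF η hη).2.1,
    (phi_analytic hω hδ0 hδ1 (Real.sinh_pos_iff.2 hη) _).congr (hF η hη).2.2.symm⟩, ?_, ?_⟩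
  · have h1 : Tendsto (fun η : ℝ => (kap η : ℂ) * (1 / (3 * (ω : ℂ)))) (𝓝[>] 0)
        (𝓝 (((1 / 2 : ℝ) : ℂ) * (1 / (3 * (ω : ℂ))))) :=
      ((Complex.continuous_ofReal.tendsto _).comp kap_lim).mul_const _
    have e : ((1 / 2 : ℝ) : ℂ) * (1 / (3 * (ω : ℂ))) = 1 / (6 * (ω : ℂ)) := by
      push_cast; field_simp; norm_num
    rw [e] at h1
    refine h1.congr' ?_
    filter_upwards [self_mem_nhdsWithin] with η hη
    have hS : 0 < Real.sinh η := Real.sinh_pos_iff.2 hη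
    have hS' : (Real.sinh η : ℂ) ≠ 0 := by exact_mod_cast hS.ne'
    rw [(hF η hη).2.2.eq_of_nhds, phi_zero hS, cc_kap]
    simp only [Complex.ofReal_mul, Complex.ofReal_pow]
    field_simp
  · have hR : Tendsto (fun η : ℝ => (2 * kap η - 1) * (Real.eulerMascheroniConstant + 1 -
        Real.log 2 - Real.log ω) + 2 * kap η * (Real.log (Real.sinh η) - Real.log η) +
        (2 * kap η - 1) * Real.log η) (𝓝[>] 0) (𝓝 0) := by
      have h1 := (((kap_lim.const_mul 2).sub_const 1).mul_const
        (Real.eulerMascheroniConstant + 1 - Real.log 2 - Real.log ω)).add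
        ((kap_lim.const_mul 2).mul sinh_log) |>.add kap_log
      simpa using h1
    have hC := (((Complex.continuous_ofReal.tendsto _).comp hR).mul_const
      (1 / (3 * (ω : ℂ)))).sub (cc_EE hω hδ0 hδ1)
    simp only [Complex.ofReal_zero, zero_mul, sub_zero] at hC
    refine hC.congr' ?_
    filter_upwards [self_mem_nhdsWithin] with η hη
    have hS : 0 < Real.sinh η := Real.sinh_pos_iff.2 hη
    have hS' : (Real.sinh η : ℂ) ≠ 0 := by exact_mod_cast hS.ne'
    rw [(hF η hη).2.2.deriv_eq, (phi_deriv hω hδ0 hδ1 hS (cc η)).deriv]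
    have e : (cc η : ℂ) * ((ω : ℂ)⁻¹ * (1 / (3 * (Real.sinh η : ℂ) ^ 2))) =
        (kap η : ℂ) * (1 / (3 * (ω : ℂ))) := by
      rw [cc_kap]
      simp only [Complex.ofReal_mul, Complex.ofReal_pow]
      field_simp
    rw [e]
    simp only [Function.comp_apply]
    generalize EE ω δ (Real.sinh η) 0 0 0 = X
    generalize hLL : Real.log (Real.sinh η) = LL
    generalize (cc η) = Y
    push_cast
    field_simp
    ring
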